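/- arXiv:2510.22393 — 2 statements merged into one kernel-verified Lean document; each statement's English description precedes it below -/
import Mathlib

section
/- Let S ⊆ {1,…,n} and let δ > 0 be such that |λ_i − λ̃_j| ≥ δ for every i ∈ S and every j ∉ S. Then ‖Π̃_S − Π_S‖ ≤ π‖E‖/(2δ). (Davis–Kahan sine theorem.) -/
open Matrix

/-- The spectral norm (ℓ²→ℓ² operator norm) of a matrix. -/
noncomputable def specNorm {𝕜 : Type*} [RCLike 𝕜] {m n : ℕ}
    (M : Matrix (Fin m) (Fin n) 𝕜) : ℝ :=
  ‖LinearMap.toContinuousLinearMap (Matrix.toEuclideanLin M)‖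

/-!
For `i ∈ S` and `j ∉ S` put `X j i = ⟪ũ_j, u_i⟫`, the matrix of `(1 - Π̃_S) Π_S`. The eigenvalue
equations give `(λ̃_j - λ_i) X j i = ⟪ũ_j, E u_i⟫`, so `X` arises from a compression of `E` by
entrywise multiplication with `1 / (λ̃_j - λ_i)`. Entrywise multiplication with
`sin (t (a_j - b_i))` is a contraction, and for `1 ≤ |s|` the function `1 / s` is the superposition
of sines `∫ tanh (π u / 2) ∫ e ^ (-u t) sin t sin (s t) dt du` over `u, t > 0`: expanding `tanh` in
partial fractions makes the integrals over `u` telescope. The total mass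
`∫ tanh (π u / 2) ∫ e ^ (-u t) |sin t| dt du = ∫ du / (1 + u ^ 2) = π / 2` is the constant of the
theorem. Since `Π_S` and `Π̃_S` have the same rank, a bound on `(1 - Π̃_S) Π_S` bounds `Π̃_S - Π_S`.
-/

namespace DavisKahan

open MeasureTheory Set Filter Topology

section Kernel

open Real

lemma integrableOn_exp_neg_mul_mul {u : ℝ} (hu : 0 < u) {f : ℝ → ℝ} (hf : Continuous f)
    (hf_le : ∀ t, |f t| ≤ 1) : IntegrableOn (fun t ↦ exp (-u * t) * f t) (Ioi 0) :=
  (integrableOn_exp_mul_Ioi (neg_lt_zero.2 hu) 0).mul_bdd hf.aestronglyMeasurable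
    (ae_of_all _ hf_le)

lemma integrableOn_exp_neg_mul_mul_cos {u : ℝ} (hu : 0 < u) (c : ℝ) :
    IntegrableOn (fun t ↦ exp (-u * t) * cos (c * t)) (Ioi 0) :=
  integrableOn_exp_neg_mul_mul hu (by fun_prop) fun t ↦ abs_cos_le_one (c * t)

lemma integrableOn_exp_neg_mul_mul_abs_sin {u : ℝ} (hu : 0 < u) :
    IntegrableOn (fun t ↦ exp (-u * t) * |sin t|) (Ioi 0) :=
  integrableOn_exp_neg_mul_mul hu (by fun_prop) fun t ↦ by simpa using abs_sin_le_one t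

lemma integrableOn_exp_neg_mul_mul_sin_mul_sin {u : ℝ} (hu : 0 < u) (s : ℝ) :
    IntegrableOn (fun t ↦ exp (-u * t) * (sin t * sin (s * t))) (Ioi 0) :=
  integrableOn_exp_neg_mul_mul hu (by fun_prop) fun t ↦ by
    rw [abs_mul]
    exact mul_le_one₀ (abs_sin_le_one t) (abs_nonneg _) (abs_sin_le_one _)

lemma integral_exp_neg_mul_mul_cos {u : ℝ} (hu : 0 < u) (c : ℝ) :
    ∫ t in Ioi 0, exp (-u * t) * cos (c * t) = u / (u ^ 2 + c ^ 2) := by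
  have hre : ((-u + c * Complex.I : ℂ)).re < 0 := by simpa
  have key := congrArg Complex.re (integral_exp_mul_complex_Ioi hre 0)
  rw [← RCLike.re_eq_complex_re, ← integral_re (integrableOn_exp_mul_complex_Ioi hre 0)] at key
  simpa [Complex.exp_re, Complex.div_re, Complex.normSq_apply, pow_two] using key

lemma integral_exp_neg_mul_mul_sin_mul_sin {u : ℝ} (hu : 0 < u) (s : ℝ) :
    ∫ t in Ioi 0, exp (-u * t) * (sin t * sin (s * t)) =
      (u / (u ^ 2 + (s - 1) ^ 2) - u / (u ^ 2 + (s + 1) ^ 2)) / 2 := by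
  rw [← integral_exp_neg_mul_mul_cos hu, ← integral_exp_neg_mul_mul_cos hu,
    ← integral_sub (integrableOn_exp_neg_mul_mul_cos hu _) (integrableOn_exp_neg_mul_mul_cos hu _),
    ← integral_div]
  congr 1 with t
  rw [sub_one_mul, add_one_mul, cos_sub, cos_add]
  ring

lemma integral_zero_pi_exp_neg_mul_mul_sin (u : ℝ) :
    ∫ t in (0 : ℝ)..π, exp (-u * t) * sin t = (1 + exp (-u * π)) / (1 + u ^ 2) := by
  have hderiv (t : ℝ) : HasDerivAt (fun t ↦ -(exp (-u * t) * (u * sin t + cos t)) / (1 + u ^ 2))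
      (exp (-u * t) * sin t) t := by
    have hexp : HasDerivAt (fun t ↦ exp (-u * t)) (exp (-u * t) * -u) t := by
      simpa using ((hasDerivAt_id t).const_mul (-u)).exp
    refine ((hexp.mul (((hasDerivAt_sin t).const_mul u).add (hasDerivAt_cos t))).neg.div_const
      (1 + u ^ 2)).congr_deriv ?_
    rw [div_eq_iff (by positivity), Pi.add_apply]
    ring
  rw [intervalIntegral.integral_eq_sub_of_hasDerivAt (fun t _ ↦ hderiv t)
    (Continuous.intervalIntegrable (by fun_prop) _ _)]
  simp
  ring

lemma one_sub_exp_neg_mul_pi_pos {u : ℝ} (hu : 0 < u) : 0 < 1 - exp (-u * π) :=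
  sub_pos.2 (exp_lt_one_iff.2 (mul_neg_of_neg_of_pos (neg_lt_zero.2 hu) pi_pos))

lemma integral_exp_neg_mul_mul_abs_sin {u : ℝ} (hu : 0 < u) :
    ∫ t in Ioi 0, exp (-u * t) * |sin t| =
      (1 + exp (-u * π)) / ((1 - exp (-u * π)) * (1 + u ^ 2)) := by
  have hne := (one_sub_exp_neg_mul_pi_pos hu).ne'
  have hint := integrableOn_exp_neg_mul_mul_abs_sin hu
  have hperiod : ∫ t in Ioi 0, exp (-u * t) * |sin t| =
      (∫ t in (0 : ℝ)..π, exp (-u * t) * sin t) + ∫ t in Ioi π, exp (-u * t) * |sin t| := by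
    rw [← intervalIntegral.integral_interval_add_Ioi hint
      (hint.mono_set (Ioi_subset_Ioi pi_nonneg))]
    congr 1
    refine intervalIntegral.integral_congr fun t ht ↦ ?_
    rw [uIcc_of_le pi_nonneg] at ht
    simp only [abs_of_nonneg (sin_nonneg_of_mem_Icc ht)]
  have hshift : ∫ t in Ioi π, exp (-u * t) * |sin t| =
      exp (-u * π) * ∫ t in Ioi 0, exp (-u * t) * |sin t| := by
    rw [← (measurePreserving_add_right volume π).setIntegral_preimage_emb
      (measurableEmbedding_addRight π), preimage_add_const_Ioi, sub_self, ← integral_const_mul]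
    simp only [sin_add_pi, abs_neg, mul_add, exp_add]
    congr 1 with t
    ring
  rw [hshift, integral_zero_pi_exp_neg_mul_mul_sin] at hperiod
  rw [mul_comm (1 - exp (-u * π)), ← div_div, eq_div_iff hne]
  linear_combination hperiod

lemma tanh_mul_integral_exp_neg_mul_mul_abs_sin {u : ℝ} (hu : 0 < u) :
    tanh (π * u / 2) * ∫ t in Ioi 0, exp (-u * t) * |sin t| = 1 / (1 + u ^ 2) := by
  have hne := (one_sub_exp_neg_mul_pi_pos hu).ne'
  have htanh : tanh (π * u / 2) = (1 - exp (-u * π)) / (1 + exp (-u * π)) := by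
    have hsplit : exp (-u * π) = exp (-(π * u / 2)) * exp (-(π * u / 2)) := by
      rw [← exp_add]
      ring_nf
    have hone : exp (π * u / 2) * exp (-(π * u / 2)) = 1 := by
      rw [← exp_add, add_neg_cancel, exp_zero]
    rw [tanh_eq, hsplit, div_eq_div_iff (by positivity) (by positivity)]
    linear_combination (2 * exp (-(π * u / 2))) * hone
  rw [htanh, integral_exp_neg_mul_mul_abs_sin hu, div_mul_div_cancel₀ (by positivity), ← div_div,
    div_self hne]

lemma hasSum_coth {u : ℝ} (hu : 0 < u) :
    HasSum (fun n : ℕ ↦ 2 * u / (u ^ 2 + (n + 1) ^ 2)) (π * (tanh (π * u))⁻¹ - 1 / u) := by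
  have hmem : (u * Complex.I : ℂ) ∈ Complex.integerComplement := by
    rintro ⟨n, hn⟩
    simpa [hu.ne'] using (congrArg Complex.im hn).symm
  have huC : (u : ℂ) ≠ 0 := by exact_mod_cast hu.ne'
  have hcot : Complex.cot (π * (u * Complex.I)) = -Complex.I * (tanh (π * u))⁻¹ := by
    rw [← mul_assoc, ← Complex.ofReal_mul, Complex.cot, Complex.cos_mul_I, Complex.sin_mul_I,
      tanh_eq_sinh_div_cosh]
    push_cast
    rw [inv_div, div_mul_eq_div_div_swap, Complex.div_I]
    ring
  have hvalue : Complex.I * (π * Complex.cot (π * (u * Complex.I)) - 1 / (u * Complex.I)) =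
      ((π * (tanh (π * u))⁻¹ - 1 / u : ℝ) : ℂ) := by
    rw [hcot]
    push_cast
    field_simp
    rw [Complex.I_sq]
    ring
  have hterm (n : ℕ) : Complex.I * cotTerm (u * Complex.I) n =
      ((2 * u / (u ^ 2 + (n + 1) ^ 2) : ℝ) : ℂ) := by
    have hprod : (u * Complex.I + (n + 1)) * (u * Complex.I - (n + 1)) =
        -((u : ℂ) ^ 2 + (n + 1) ^ 2) := by
      linear_combination (u : ℂ) ^ 2 * Complex.I_sq
    rw [cotTerm_identity hmem, hprod]
    push_cast
    rw [div_neg]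
    linear_combination -(2 * u / ((u : ℂ) ^ 2 + (n + 1) ^ 2)) * Complex.I_sq
  have hsum := (summable_cotTerm hmem).hasSum.mul_left Complex.I
  rw [show ∑' n, cotTerm (u * Complex.I) n = _ from (cot_series_rep' hmem).symm, hvalue] at hsum
  simp only [hterm] at hsum
  exact Complex.hasSum_ofReal.1 hsum

lemma two_mul_inv_tanh_two_mul_sub_inv_tanh {y : ℝ} (hy : 0 < y) :
    2 * (tanh (2 * y))⁻¹ - (tanh y)⁻¹ = tanh y := by
  have hsinh := (sinh_pos_iff.2 hy).ne'
  have hcosh := (cosh_pos y).ne'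
  simp only [tanh_eq_sinh_div_cosh, sinh_two_mul, cosh_two_mul, inv_div]
  field_simp
  ring

lemma hasSum_tanh {u : ℝ} (hu : 0 < u) :
    HasSum (fun k : ℕ ↦ 4 * u / (u ^ 2 + (2 * k + 1) ^ 2)) (π * tanh (π * u / 2)) := by
  let f : ℕ → ℝ := fun n ↦ 4 * u / (u ^ 2 + (n + 1 : ℝ) ^ 2)
  have hf : HasSum f (2 * (π * (tanh (π * u))⁻¹ - 1 / u)) :=
    ((hasSum_coth hu).mul_left 2).congr_fun fun n ↦ by simp only [f]; ring
  have hodd : HasSum (fun k ↦ f (2 * k + 1)) (π * (tanh (π * (u / 2)))⁻¹ - 1 / (u / 2)) :=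
    (hasSum_coth (half_pos hu)).congr_fun fun k ↦ by
      simp only [f]; push_cast; field_simp; ring
  have heven : Summable fun k ↦ f (2 * k) :=
    hf.summable.comp_injective (mul_right_injective₀ (two_ne_zero' ℕ))
  have hsplit := (heven.hasSum.even_add_odd hodd).unique hf
  have htanh := two_mul_inv_tanh_two_mul_sub_inv_tanh (y := π * u / 2) (by positivity)
  have hvalue : ∑' k, f (2 * k) = π * tanh (π * u / 2) := by
    rw [mul_div_cancel₀ _ two_ne_zero] at htanh
    rw [← htanh]
    rw [← mul_div_assoc] at hsplit
    linear_combination hsplit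
  rw [← hvalue]
  exact heven.hasSum.congr_fun fun k ↦ by simp [f]

lemma sq_div_sq_add_sq_eq_inv_one_add_sq {c : ℝ} (hc : c ≠ 0) (u : ℝ) :
    c ^ 2 / (u ^ 2 + c ^ 2) = (1 + (c⁻¹ * u) ^ 2)⁻¹ := by
  field_simp
  ring

lemma integrable_sq_div_sq_add_sq (c : ℝ) : Integrable fun u : ℝ ↦ c ^ 2 / (u ^ 2 + c ^ 2) := by
  rcases eq_or_ne c 0 with rfl | hc
  · simp
  · simp only [sq_div_sq_add_sq_eq_inv_one_add_sq hc]
    exact integrable_inv_one_add_sq.comp_mul_left' (inv_ne_zero hc)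

lemma integral_Ioi_sq_div_sq_add_sq {c : ℝ} (hc : 0 ≤ c) :
    ∫ u in Ioi (0 : ℝ), c ^ 2 / (u ^ 2 + c ^ 2) = c * (π / 2) := by
  rcases hc.eq_or_lt with rfl | hc
  · simp
  · simp only [sq_div_sq_add_sq_eq_inv_one_add_sq hc.ne']
    rw [integral_comp_mul_left_Ioi (fun u ↦ (1 + u ^ 2)⁻¹) 0 (inv_pos.2 hc)]
    simp [integral_Ioi_inv_one_add_sq]

lemma integrable_sq_div_sq_add_sq_mul {k : ℝ} (hk : 0 < k) (c : ℝ) :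
    Integrable fun u : ℝ ↦ u ^ 2 / ((u ^ 2 + k ^ 2) * (u ^ 2 + c ^ 2)) := by
  refine ((integrable_sq_div_sq_add_sq k).const_mul (k ^ 2)⁻¹).mono'
    (Measurable.aestronglyMeasurable (by fun_prop)) (ae_of_all _ fun u ↦ ?_)
  have hle : u ^ 2 / (u ^ 2 + c ^ 2) ≤ 1 := div_le_one_of_le₀ (by nlinarith) (by positivity)
  calc ‖u ^ 2 / ((u ^ 2 + k ^ 2) * (u ^ 2 + c ^ 2))‖
      = (u ^ 2 / (u ^ 2 + c ^ 2)) / (u ^ 2 + k ^ 2) := by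
        rw [norm_of_nonneg (by positivity), mul_comm, div_div]
    _ ≤ 1 / (u ^ 2 + k ^ 2) := by gcongr
    _ = (k ^ 2)⁻¹ * (k ^ 2 / (u ^ 2 + k ^ 2)) := by field_simp

lemma integral_Ioi_sq_div_sq_add_sq_mul_self {k : ℝ} (hk : 0 < k) :
    ∫ u in Ioi (0 : ℝ), u ^ 2 / ((u ^ 2 + k ^ 2) * (u ^ 2 + k ^ 2)) = π / (2 * (k + k)) := by
  have hderiv (u : ℝ) : HasDerivAt (fun u ↦ (arctan (k⁻¹ * u) / k - u / (u ^ 2 + k ^ 2)) / 2)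
      (u ^ 2 / ((u ^ 2 + k ^ 2) * (u ^ 2 + k ^ 2))) u := by
    refine (((((hasDerivAt_id u).const_mul k⁻¹).arctan).div_const k).sub
      ((hasDerivAt_id u).div ((hasDerivAt_pow 2 u).add_const (k ^ 2)) (by positivity))
      |>.div_const 2).congr_deriv ?_
    simp only [id]
    field_simp
    ring
  have hlim : Tendsto (fun u ↦ (arctan (k⁻¹ * u) / k - u / (u ^ 2 + k ^ 2)) / 2) atTop
      (𝓝 ((π / 2 / k - 0) / 2)) := by
    have hrat : Tendsto (fun u ↦ u / (u ^ 2 + k ^ 2)) atTop (𝓝 0) := by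
      refine squeeze_zero' (g := fun u ↦ u⁻¹) ?_ ?_ tendsto_inv_atTop_zero
      · filter_upwards [eventually_gt_atTop 0] with u hu using by positivity
      · filter_upwards [eventually_gt_atTop 0] with u hu
        rw [inv_eq_one_div, div_le_div_iff₀ (by positivity) hu]
        nlinarith [sq_nonneg k]
    exact ((((tendsto_nhds_of_tendsto_nhdsWithin tendsto_arctan_atTop).comp
      (tendsto_id.const_mul_atTop (inv_pos.2 hk))).div_const k).sub hrat).div_const 2
  rw [integral_Ioi_of_hasDerivAt_of_tendsto' (fun u _ ↦ hderiv u)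
    (integrable_sq_div_sq_add_sq_mul hk k).integrableOn hlim]
  simp
  field_simp
  ring

lemma integral_Ioi_sq_div_sq_add_sq_mul {k c : ℝ} (hk : 0 < k) (hc : 0 ≤ c) :
    ∫ u in Ioi (0 : ℝ), u ^ 2 / ((u ^ 2 + k ^ 2) * (u ^ 2 + c ^ 2)) = π / (2 * (k + c)) := by
  rcases eq_or_ne k c with rfl | hne
  · exact integral_Ioi_sq_div_sq_add_sq_mul_self hk
  have hsq : k ^ 2 - c ^ 2 ≠ 0 := by
    rw [sq_sub_sq]
    exact mul_ne_zero (by positivity) (sub_ne_zero.2 hne)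
  have hfrac {u : ℝ} (hu : u ∈ Ioi 0) : u ^ 2 / ((u ^ 2 + k ^ 2) * (u ^ 2 + c ^ 2)) =
      (k ^ 2 / (u ^ 2 + k ^ 2) - c ^ 2 / (u ^ 2 + c ^ 2)) / (k ^ 2 - c ^ 2) := by
    have := mem_Ioi.1 hu
    field_simp
    ring
  rw [setIntegral_congr_fun measurableSet_Ioi fun u hu ↦ hfrac hu, integral_div,
    integral_sub (integrable_sq_div_sq_add_sq k).integrableOn
      (integrable_sq_div_sq_add_sq c).integrableOn,
    integral_Ioi_sq_div_sq_add_sq hk.le, integral_Ioi_sq_div_sq_add_sq hc, ← sub_mul, sq_sub_sq]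
  have := sub_ne_zero.2 hne
  field_simp

/-- The multiplier `s ↦ tanh (π u / 2) * ∫ e ^ (-u t) sin t sin (s t) dt`; integrating it over `u`
produces `1 / s` for `1 ≤ |s|`. -/
noncomputable def sineKernel (u s : ℝ) : ℝ :=
  tanh (π * u / 2) * ∫ t in Ioi 0, exp (-u * t) * (sin t * sin (s * t))

lemma sineKernel_neg (u s : ℝ) : sineKernel u (-s) = -sineKernel u s := by
  simp [sineKernel, integral_neg]

lemma sineKernel_eq {u : ℝ} (hu : 0 < u) (s : ℝ) : sineKernel u s =
    tanh (π * u / 2) * ((u / (u ^ 2 + (s - 1) ^ 2) - u / (u ^ 2 + (s + 1) ^ 2)) / 2) := by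
  rw [sineKernel, integral_exp_neg_mul_mul_sin_mul_sin hu]

/-- The `k`-th term of the expansion of `sineKernel u s` induced by the partial fractions of
`tanh (π u / 2)`. -/
noncomputable def sineKernelTerm (k : ℕ) (u s : ℝ) : ℝ :=
  2 / π * (u ^ 2 / ((u ^ 2 + (2 * k + 1) ^ 2) * (u ^ 2 + (s - 1) ^ 2)) -
    u ^ 2 / ((u ^ 2 + (2 * k + 1) ^ 2) * (u ^ 2 + (s + 1) ^ 2)))

lemma hasSum_sineKernelTerm {u : ℝ} (hu : 0 < u) (s : ℝ) :
    HasSum (sineKernelTerm · u s) (sineKernel u s) := by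
  have hvalue : sineKernel u s = π * tanh (π * u / 2) *
      ((u / (u ^ 2 + (s - 1) ^ 2) - u / (u ^ 2 + (s + 1) ^ 2)) / (2 * π)) := by
    rw [sineKernel_eq hu]
    field_simp
  rw [hvalue]
  refine ((hasSum_tanh hu).mul_right _).congr_fun fun k ↦ ?_
  rw [sineKernelTerm]
  field_simp
  ring

lemma sineKernelTerm_nonneg (k : ℕ) {u s : ℝ} (hu : 0 < u) (hs : 0 ≤ s) :
    0 ≤ sineKernelTerm k u s := by
  refine mul_nonneg (by positivity) (sub_nonneg.2 ?_)
  gcongr u ^ 2 / ((u ^ 2 + (2 * k + 1) ^ 2) * ?_)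
  nlinarith

lemma integrable_sineKernelTerm (k : ℕ) (s : ℝ) : Integrable (sineKernelTerm k · s) :=
  ((integrable_sq_div_sq_add_sq_mul (by positivity) _).sub
    (integrable_sq_div_sq_add_sq_mul (by positivity) _)).const_mul _

lemma integral_sineKernelTerm (k : ℕ) {s : ℝ} (hs : 1 ≤ s) :
    ∫ u in Ioi 0, sineKernelTerm k u s = 1 / (2 * k + s) - 1 / (2 * (k + 1 : ℕ) + s) := by
  have hk : (0 : ℝ) < 2 * k + 1 := by positivity
  simp only [sineKernelTerm]
  rw [integral_const_mul, integral_sub (integrable_sq_div_sq_add_sq_mul hk _).integrableOn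
    (integrable_sq_div_sq_add_sq_mul hk _).integrableOn,
    integral_Ioi_sq_div_sq_add_sq_mul hk (by linarith),
    integral_Ioi_sq_div_sq_add_sq_mul hk (by linarith)]
  have hsub : (2 * k + 1 + (s - 1) : ℝ) = 2 * k + s := by ring
  have hadd : (2 * k + 1 + (s + 1) : ℝ) = 2 * (k + 1 : ℕ) + s := by
    push_cast
    ring
  rw [hsub, hadd]
  field_simp

lemma hasSum_one_div_sub_one_div {s : ℝ} (hs : 0 < s) :
    HasSum (fun k : ℕ ↦ 1 / (2 * k + s) - 1 / (2 * (k + 1 : ℕ) + s)) (1 / s) := by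
  let g : ℕ → ℝ := fun k ↦ 1 / (2 * k + s)
  have hlim : Tendsto g atTop (𝓝 0) :=
    tendsto_const_nhds.div_atTop (tendsto_atTop_add_const_right _ _
      (tendsto_natCast_atTop_atTop.const_mul_atTop two_pos))
  have hanti (k : ℕ) : g (k + 1) ≤ g k := by
    simp only [g]
    gcongr
    exact k.le_succ
  refine (hasSum_iff_tendsto_nat_of_nonneg (fun k ↦ sub_nonneg.2 (hanti k)) _).2 ?_
  simp only [Finset.sum_range_sub' g]
  simpa [g] using hlim.const_sub (g 0)

lemma integral_sineKernel_of_one_le {s : ℝ} (hs : 1 ≤ s) :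
    ∫ u in Ioi 0, sineKernel u s = 1 / s := by
  have htelescope := hasSum_one_div_sub_one_div (zero_lt_one.trans_le hs)
  simp only [← integral_sineKernelTerm _ hs] at htelescope
  have hnorm : Summable fun k ↦ ∫ u in Ioi 0, ‖sineKernelTerm k u s‖ := by
    refine htelescope.summable.congr fun k ↦ setIntegral_congr_fun measurableSet_Ioi fun u hu ↦ ?_
    exact (norm_of_nonneg (sineKernelTerm_nonneg k hu (zero_le_one.trans hs))).symm
  rw [setIntegral_congr_fun measurableSet_Ioi fun u hu ↦
    (hasSum_sineKernelTerm hu s).tsum_eq.symm]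
  exact (hasSum_integral_of_summable_integral_norm
    (fun k ↦ (integrable_sineKernelTerm k s).integrableOn) hnorm).unique htelescope

lemma integral_sineKernel {s : ℝ} (hs : 1 ≤ |s|) : ∫ u in Ioi 0, sineKernel u s = 1 / s := by
  rcases le_abs'.1 hs with hs | hs
  · have h := integral_sineKernel_of_one_le (le_neg_of_le_neg hs)
    simpa [sineKernel_neg, integral_neg, div_neg] using h
  · exact integral_sineKernel_of_one_le hs

lemma integrableOn_sineKernel {s : ℝ} (hs : 1 ≤ |s|) : IntegrableOn (sineKernel · s) (Ioi 0) := by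
  refine Integrable.of_integral_ne_zero ?_
  rw [integral_sineKernel hs]
  exact one_div_ne_zero (abs_pos.1 (zero_lt_one.trans_le hs))

end Kernel

section SchurMultiplier

open scoped Matrix.Norms.L2Operator

variable {𝕜 I J : Type*} [RCLike 𝕜] [Fintype I] [Fintype J]

lemma norm_sin_smul_sub_cos_smul_sq_le (θ : ℝ) (p q : 𝕜) :
    ‖Real.sin θ • p - Real.cos θ • q‖ ^ 2 ≤ ‖p‖ ^ 2 + ‖q‖ ^ 2 := by
  have htri : ‖Real.sin θ • p - Real.cos θ • q‖ ≤ |Real.sin θ| * ‖p‖ + |Real.cos θ| * ‖q‖ := by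
    simpa only [norm_smul, Real.norm_eq_abs] using norm_sub_le (Real.sin θ • p) (Real.cos θ • q)
  calc _ ≤ (|Real.sin θ| * ‖p‖ + |Real.cos θ| * ‖q‖) ^ 2 := by gcongr
    _ ≤ (|Real.sin θ| ^ 2 + |Real.cos θ| ^ 2) * (‖p‖ ^ 2 + ‖q‖ ^ 2) := by
      nlinarith [sq_nonneg (|Real.sin θ| * ‖q‖ - |Real.cos θ| * ‖p‖)]
    _ = ‖p‖ ^ 2 + ‖q‖ ^ 2 := by rw [sq_abs, sq_abs, Real.sin_sq_add_cos_sq, one_mul]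

lemma norm_cos_smul_sq_add_norm_sin_smul_sq (b : J → ℝ) (x : EuclideanSpace 𝕜 J) :
    ‖WithLp.toLp 2 fun j ↦ Real.cos (b j) • x j‖ ^ 2 +
      ‖WithLp.toLp 2 fun j ↦ Real.sin (b j) • x j‖ ^ 2 = ‖x‖ ^ 2 := by
  simp only [EuclideanSpace.norm_sq_eq, ← Finset.sum_add_distrib, norm_smul, mul_pow, ← add_mul,
    Real.norm_eq_abs, sq_abs, Real.cos_sq_add_sin_sq, one_mul]

variable [DecidableEq J]

lemma norm_le_of_norm_mulVec_le {M : Matrix I J 𝕜} {C : ℝ} (hC : 0 ≤ C)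
    (h : ∀ x : EuclideanSpace 𝕜 J, ‖WithLp.toLp 2 (M *ᵥ x)‖ ≤ C * ‖x‖) : ‖M‖ ≤ C :=
  ContinuousLinearMap.opNorm_le_bound _ hC h

variable (𝕜) in
/-- The entrywise product with `K` is bounded by `c`, for the `ℓ²` operator norm, on matrices
over `𝕜`: the Schur multiplier norm of `K` is at most `c`. -/
def SchurMultiplierBound (K : I → J → ℝ) (c : ℝ) : Prop :=
  ∀ Y : Matrix I J 𝕜, ‖of fun i j ↦ K i j • Y i j‖ ≤ c * ‖Y‖

namespace SchurMultiplierBound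

lemma const_mul {K : I → J → ℝ} {c : ℝ} (h : SchurMultiplierBound 𝕜 K c) (r : ℝ) :
    SchurMultiplierBound 𝕜 (fun i j ↦ r * K i j) (|r| * c) := by
  intro Y
  have hsmul : (of fun i j ↦ (r * K i j) • Y i j) = (r : 𝕜) • of fun i j ↦ K i j • Y i j := by
    ext i j
    simp [mul_smul, RCLike.real_smul_eq_coe_mul]
  rw [hsmul, norm_smul, RCLike.norm_ofReal, mul_assoc]
  exact mul_le_mul_of_nonneg_left (h Y) (abs_nonneg r)

lemma integral {α : Type*} [MeasurableSpace α] {μ : Measure α} {K : α → I → J → ℝ} {c : α → ℝ}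
    (hK : ∀ i j, Integrable (K · i j) μ) (hc : Integrable c μ)
    (h : ∀ᵐ a ∂μ, SchurMultiplierBound 𝕜 (K a) (c a)) :
    SchurMultiplierBound 𝕜 (fun i j ↦ ∫ a, K a i j ∂μ) (∫ a, c a ∂μ) := by
  intro Y
  rw [← integral_mul_const]
  refine norm_le_of_norm_mulVec_le
    (integral_nonneg_of_ae (h.mono fun a ha ↦ (norm_nonneg _).trans (ha Y))) fun x ↦ ?_
  have hint (i j) : Integrable (fun a ↦ K a i j • Y i j * x j) μ :=
    ((hK i j).smul_const (Y i j)).mul_const (x j)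
  have hmulVec : WithLp.toLp 2 ((of fun i j ↦ (∫ a, K a i j ∂μ) • Y i j) *ᵥ x) =
      ∫ a, WithLp.toLp 2 ((of fun i j ↦ K a i j • Y i j) *ᵥ x) ∂μ := by
    ext i
    rw [eval_integral_piLp fun i ↦ integrable_finsetSum _ fun j _ ↦ hint i j]
    simp only [mulVec, dotProduct, of_apply]
    rw [integral_finsetSum _ fun j _ ↦ hint i j]
    simp only [integral_mul_const, integral_smul_const]
  rw [hmulVec, ← integral_mul_const]
  refine norm_integral_le_of_norm_le ((hc.mul_const _).mul_const _) (h.mono fun a ha ↦ ?_)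
  exact (l2_opNorm_mulVec _ x).trans (mul_le_mul_of_nonneg_right (ha Y) (norm_nonneg x))

end SchurMultiplierBound

lemma schurMultiplierBound_sin_sub (a : I → ℝ) (b : J → ℝ) :
    SchurMultiplierBound 𝕜 (fun i j ↦ Real.sin (a i - b j)) 1 := by
  intro Y
  rw [one_mul]
  refine norm_le_of_norm_mulVec_le (norm_nonneg Y) fun x ↦ ?_
  set xc : EuclideanSpace 𝕜 J := WithLp.toLp 2 fun j ↦ Real.cos (b j) • x j with hxc
  set xs : EuclideanSpace 𝕜 J := WithLp.toLp 2 fun j ↦ Real.sin (b j) • x j with hxs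
  have hmulVec (i : I) : ((of fun i j ↦ Real.sin (a i - b j) • Y i j) *ᵥ x) i =
      Real.sin (a i) • (Y *ᵥ xc) i - Real.cos (a i) • (Y *ᵥ xs) i := by
    simp only [mulVec, dotProduct, of_apply, Finset.smul_sum, ← Finset.sum_sub_distrib, hxc, hxs]
    refine Finset.sum_congr rfl fun j _ ↦ ?_
    simp only [Real.sin_sub, RCLike.real_smul_eq_coe_mul]
    push_cast
    ring
  refine le_of_sq_le_sq ?_ (by positivity)
  calc ‖WithLp.toLp 2 ((of fun i j ↦ Real.sin (a i - b j) • Y i j) *ᵥ x)‖ ^ 2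
      ≤ ‖WithLp.toLp 2 (Y *ᵥ xc)‖ ^ 2 + ‖WithLp.toLp 2 (Y *ᵥ xs)‖ ^ 2 := by
        simp only [EuclideanSpace.norm_sq_eq, ← Finset.sum_add_distrib, hmulVec]
        exact Finset.sum_le_sum fun i _ ↦ norm_sin_smul_sub_cos_smul_sq_le _ _ _
    _ ≤ (‖Y‖ * ‖xc‖) ^ 2 + (‖Y‖ * ‖xs‖) ^ 2 := by
        gcongr
        · exact l2_opNorm_mulVec Y xc
        · exact l2_opNorm_mulVec Y xs
    _ = (‖Y‖ * ‖x‖) ^ 2 := by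
        rw [mul_pow, mul_pow, ← mul_add, norm_cos_smul_sq_add_norm_sin_smul_sq, mul_pow]

lemma schurMultiplierBound_sineKernel {u : ℝ} (hu : 0 < u) (a : I → ℝ) (b : J → ℝ) :
    SchurMultiplierBound 𝕜 (fun i j ↦ sineKernel u (a i - b j)) (1 / (1 + u ^ 2)) := by
  have htanh : 0 ≤ Real.tanh (Real.pi * u / 2) := by
    rw [Real.tanh_eq_sinh_div_cosh]
    exact div_nonneg (Real.sinh_nonneg_iff.2 (by positivity)) (Real.cosh_pos _).le
  rw [← tanh_mul_integral_exp_neg_mul_mul_abs_sin hu, ← abs_of_nonneg htanh]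
  refine .const_mul (.integral (fun i j ↦ integrableOn_exp_neg_mul_mul_sin_mul_sin hu _)
    (integrableOn_exp_neg_mul_mul_abs_sin hu) (ae_of_all _ fun t ↦ ?_)) _
  have h := (schurMultiplierBound_sin_sub (𝕜 := 𝕜) (fun i ↦ a i * t) (fun j ↦ b j * t)).const_mul
    (Real.exp (-u * t) * Real.sin t)
  simpa only [← sub_mul, mul_assoc, abs_mul, Real.abs_exp, mul_one] using h

lemma schurMultiplierBound_one_div_sub {a : I → ℝ} {b : J → ℝ} (h : ∀ i j, 1 ≤ |a i - b j|) :
    SchurMultiplierBound 𝕜 (fun i j ↦ 1 / (a i - b j)) (Real.pi / 2) := by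
  have hmass : ∫ u in Ioi (0 : ℝ), 1 / (1 + u ^ 2) = Real.pi / 2 := by
    simp [integral_Ioi_inv_one_add_sq]
  simp only [← hmass, ← fun i j ↦ integral_sineKernel (h i j)]
  refine .integral (fun i j ↦ integrableOn_sineKernel (h i j))
    (by simpa using integrable_inv_one_add_sq.restrict)
    (ae_restrict_of_forall_mem measurableSet_Ioi fun u hu ↦ schurMultiplierBound_sineKernel hu a b)

lemma norm_le_mul_norm_sub_smul {a : I → ℝ} {b : J → ℝ} {δ : ℝ} (hδ : 0 < δ)
    (h : ∀ i j, δ ≤ |a i - b j|) (X : Matrix I J 𝕜) :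
    ‖X‖ ≤ Real.pi / (2 * δ) * ‖of fun i j ↦ (a i - b j) • X i j‖ := by
  have hne (i j) : a i - b j ≠ 0 := abs_pos.1 (hδ.trans_le (h i j))
  have hscaled (i j) : 1 ≤ |a i / δ - b j / δ| := by
    rw [← sub_div, abs_div, abs_of_pos hδ, one_le_div hδ]
    exact h i j
  have hbound := (schurMultiplierBound_one_div_sub (𝕜 := 𝕜) hscaled).const_mul δ⁻¹
    (of fun i j ↦ (a i - b j) • X i j)
  convert hbound using 1
  · congr 1 with i j
    simp only [of_apply, smul_smul, ← sub_div]
    rw [one_div_div, div_eq_mul_inv, inv_mul_cancel_left₀ hδ.ne', inv_mul_cancel₀ (hne i j),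
      one_smul]
  · rw [abs_of_pos (inv_pos.2 hδ)]
    field_simp

end SchurMultiplier

section Projection

open Module Submodule
open scoped InnerProductSpace

variable {𝕜 V : Type*} [RCLike 𝕜] [NormedAddCommGroup V] [InnerProductSpace 𝕜 V]

lemma norm_sq_starProjection_add_norm_sq_sub (U : Submodule 𝕜 V) [U.HasOrthogonalProjection]
    (x : V) : ‖U.starProjection x‖ ^ 2 + ‖x - U.starProjection x‖ ^ 2 = ‖x‖ ^ 2 := by
  rw [norm_sq_eq_add_norm_sq_starProjection x U, starProjection_orthogonal_val]

lemma exists_mem_starProjection_eq {U W : Submodule 𝕜 V} [FiniteDimensional 𝕜 U]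
    [FiniteDimensional 𝕜 W] (hdim : finrank 𝕜 U = finrank 𝕜 W)
    (hinj : ∀ p ∈ U, W.starProjection p = 0 → p = 0) {q : V} (hq : q ∈ W) :
    ∃ p ∈ U, W.starProjection p = q := by
  let P : U →ₗ[𝕜] W := (W.orthogonalProjectionOnto : V →ₗ[𝕜] W) ∘ₗ U.subtype
  have hP : Function.Injective P := by
    rw [injective_iff_map_eq_zero]
    exact fun p hp ↦ Subtype.ext (hinj p p.2 (congrArg Subtype.val hp))
  obtain ⟨p, hp⟩ := (LinearMap.injective_iff_surjective_of_finrank_eq_finrank hdim).1 hP ⟨q, hq⟩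
  exact ⟨p, p.2, congrArg Subtype.val hp⟩

lemma norm_starProjection_sq_le {U : Submodule 𝕜 V} (W : Submodule 𝕜 V)
    [U.HasOrthogonalProjection] [W.HasOrthogonalProjection] {p : V} (hp : p ∈ U) :
    ‖W.starProjection p‖ ^ 2 ≤ ‖U.starProjection (W.starProjection p)‖ * ‖p‖ := by
  have hinner : ⟪U.starProjection (W.starProjection p), p⟫_𝕜 =
      ⟪W.starProjection p, W.starProjection p⟫_𝕜 := by
    rw [inner_starProjection_left_eq_right, starProjection_eq_self_iff.2 hp,
      ← inner_starProjection_left_eq_right W, starProjection_eq_self_iff.2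
        (starProjection_apply_mem W p)]
  rw [← inner_self_eq_norm_sq (𝕜 := 𝕜), ← hinner]
  exact re_inner_le_norm _ _

-- In equal dimensions the smallness of `1 - P_W` on `U` makes `P_W : U → W` onto, so every `q ∈ W`
-- is some `P_W p`, and `‖q‖² ≤ ‖P_U q‖ ‖p‖` turns the lower bound for `P_W` into one for `P_U`.
lemma norm_sub_starProjection_le_symm {U W : Submodule 𝕜 V} [FiniteDimensional 𝕜 U]
    [FiniteDimensional 𝕜 W] (hdim : finrank 𝕜 U = finrank 𝕜 W) {s : ℝ} (hs : 0 ≤ s)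
    (h : ∀ p ∈ U, ‖p - W.starProjection p‖ ≤ s * ‖p‖) {q : V} (hq : q ∈ W) :
    ‖q - U.starProjection q‖ ≤ s * ‖q‖ := by
  have hpyth := norm_sq_starProjection_add_norm_sq_sub U q
  rcases le_or_gt 1 s with hs1 | hs1
  · refine le_trans ?_ (le_mul_of_one_le_left (norm_nonneg q) hs1)
    exact le_of_sq_le_sq (by nlinarith [sq_nonneg ‖U.starProjection q‖]) (norm_nonneg q)
  have hlower (p : V) (hp : p ∈ U) : (1 - s ^ 2) * ‖p‖ ^ 2 ≤ ‖W.starProjection p‖ ^ 2 := by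
    have hsq := pow_le_pow_left₀ (norm_nonneg _) (h p hp) 2
    linarith [norm_sq_starProjection_add_norm_sq_sub W p, mul_pow s ‖p‖ 2]
  have hgap : 0 < 1 - s ^ 2 := by nlinarith
  obtain ⟨p, hp, rfl⟩ := exists_mem_starProjection_eq hdim (fun p hp hp0 ↦ by
    have hle := hlower p hp
    rw [hp0, norm_zero] at hle
    exact norm_eq_zero.1 (pow_eq_zero_iff two_ne_zero |>.1 (by nlinarith [sq_nonneg ‖p‖]))) hq
  set q := W.starProjection p
  suffices hproj : (1 - s ^ 2) * ‖q‖ ^ 2 ≤ ‖U.starProjection q‖ ^ 2 from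
    le_of_sq_le_sq (by linarith [mul_pow s ‖q‖ 2]) (by positivity)
  rcases eq_or_ne q 0 with hq0 | hq0
  · simp [hq0]
  refine le_of_mul_le_mul_right ?_ (pow_pos (norm_pos_iff.2 hq0) 2)
  calc (1 - s ^ 2) * ‖q‖ ^ 2 * ‖q‖ ^ 2
      ≤ (1 - s ^ 2) * (‖U.starProjection q‖ * ‖p‖) ^ 2 := by
        rw [mul_assoc, ← sq (‖q‖ ^ 2)]
        gcongr
        exact norm_starProjection_sq_le W hp
    _ = ‖U.starProjection q‖ ^ 2 * ((1 - s ^ 2) * ‖p‖ ^ 2) := by ring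
    _ ≤ ‖U.starProjection q‖ ^ 2 * ‖q‖ ^ 2 := by
        gcongr
        exact hlower p hp

lemma norm_starProjection_sub_starProjection_le {U W : Submodule 𝕜 V}
    [U.HasOrthogonalProjection] [W.HasOrthogonalProjection] {s : ℝ} (hs : 0 ≤ s)
    (hW : ∀ q ∈ W, ‖q - U.starProjection q‖ ≤ s * ‖q‖) (x : V) :
    ‖W.starProjection (x - U.starProjection x)‖ ≤ s * ‖x - U.starProjection x‖ := by
  set r := x - U.starProjection x with hr
  set y := W.starProjection r with hy
  have hinner : ⟪y - U.starProjection y, r⟫_𝕜 = ⟪y, y⟫_𝕜 := by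
    have horth : ⟪U.starProjection y, r⟫_𝕜 = 0 := by
      rw [inner_starProjection_left_eq_right, hr, map_sub,
        starProjection_eq_self_iff.2 (starProjection_apply_mem U x), sub_self, inner_zero_right]
    rw [inner_sub_left, horth, sub_zero, hy, inner_starProjection_left_eq_right,
      inner_starProjection_left_eq_right,
      starProjection_eq_self_iff.2 (starProjection_apply_mem W r)]
  have hmul : ‖y‖ * ‖y‖ ≤ s * ‖r‖ * ‖y‖ := calc
    ‖y‖ * ‖y‖ = RCLike.re ⟪y - U.starProjection y, r⟫_𝕜 := by
      rw [hinner, inner_self_eq_norm_mul_norm]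
    _ ≤ ‖y - U.starProjection y‖ * ‖r‖ := re_inner_le_norm _ _
    _ ≤ s * ‖y‖ * ‖r‖ := by
      gcongr
      exact hW y (starProjection_apply_mem W r)
    _ = s * ‖r‖ * ‖y‖ := by ring
  rcases (norm_nonneg y).eq_or_lt with h0 | hpos
  · rw [← h0]
    positivity
  · exact le_of_mul_le_mul_right hmul hpos

lemma norm_starProjection_sub_le {U W : Submodule 𝕜 V} [U.HasOrthogonalProjection]
    [W.HasOrthogonalProjection] {s : ℝ} (hs : 0 ≤ s)
    (hU : ∀ p ∈ U, ‖p - W.starProjection p‖ ≤ s * ‖p‖)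
    (hW : ∀ q ∈ W, ‖q - U.starProjection q‖ ≤ s * ‖q‖) :
    ‖W.starProjection - U.starProjection‖ ≤ s := by
  refine ContinuousLinearMap.opNorm_le_bound _ hs fun x ↦ le_of_sq_le_sq ?_ (by positivity)
  have hx := norm_sq_starProjection_add_norm_sq_sub U x
  set p := U.starProjection x
  have hz : (W.starProjection - U.starProjection) x =
      W.starProjection (x - p) - (p - W.starProjection p) := by
    simp [p]
  have hWz : W.starProjection (W.starProjection (x - p) - (p - W.starProjection p)) =
      W.starProjection (x - p) := by
    simp [starProjection_eq_self_iff.2 (starProjection_apply_mem W _)]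
  calc ‖(W.starProjection - U.starProjection) x‖ ^ 2
      = ‖W.starProjection (x - p)‖ ^ 2 + ‖p - W.starProjection p‖ ^ 2 := by
        rw [hz, ← norm_sq_starProjection_add_norm_sq_sub W, hWz, sub_sub_cancel_left, norm_neg]
    _ ≤ (s * ‖x - p‖) ^ 2 + (s * ‖p‖) ^ 2 := by
        gcongr
        · exact norm_starProjection_sub_starProjection_le hs hW x
        · exact hU p (starProjection_apply_mem U x)
    _ = (s * ‖x‖) ^ 2 := by
        rw [mul_pow, mul_pow, mul_pow, ← hx]
        ring

end Projection

section EigenvectorSpans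

open Module Submodule InnerProductSpace
open scoped InnerProductSpace Matrix.Norms.L2Operator

variable {𝕜 V ι κ : Type*} [RCLike 𝕜] [NormedAddCommGroup V] [InnerProductSpace 𝕜 V]
  [Fintype ι] [Fintype κ]

lemma starProjection_span_range {v : ι → V} (hv : Orthonormal 𝕜 v)
    [(span 𝕜 (range v)).HasOrthogonalProjection] :
    (span 𝕜 (range v)).starProjection = ∑ i, rankOne 𝕜 (v i) (v i) := by
  ext x
  refine (eq_starProjection_of_mem_of_inner_eq_zero ?_ fun w hw ↦ ?_)
  · simp only [_root_.sum_apply, rankOne_apply]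
    exact sum_mem fun i _ ↦ smul_mem _ _ (subset_span (mem_range_self i))
  · obtain ⟨a, rfl⟩ := mem_span_range_iff_exists_fun 𝕜 |>.1 hw
    simp only [inner_sum, inner_smul_right, inner_sub_left, _root_.sum_apply,
      rankOne_apply, hv.inner_left_fintype, inner_conj_symm, sub_self, mul_zero,
      Finset.sum_const_zero]

lemma norm_sum_smul_of_orthonormal {v : ι → V} (hv : Orthonormal 𝕜 v) (a : EuclideanSpace 𝕜 ι) :
    ‖∑ i, a i • v i‖ = ‖a‖ := by
  refine (sq_eq_sq₀ (norm_nonneg _) (norm_nonneg _)).1 ?_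
  rw [EuclideanSpace.norm_sq_eq, ← inner_self_eq_norm_sq (𝕜 := 𝕜), hv.inner_sum]
  simp only [RCLike.conj_mul, map_sum, ← RCLike.ofReal_pow, RCLike.ofReal_re]

lemma norm_of_inner_apply_le [DecidableEq ι] {e : κ → V} {u : ι → V} (he : Orthonormal 𝕜 e)
    (hu : Orthonormal 𝕜 u) (L : V →L[𝕜] V) : ‖of fun j i ↦ ⟪e j, L (u i)⟫_𝕜‖ ≤ ‖L‖ := by
  refine norm_le_of_norm_mulVec_le (norm_nonneg L) fun a ↦ ?_
  have hmulVec : (of fun j i ↦ ⟪e j, L (u i)⟫_𝕜) *ᵥ a = fun j ↦ ⟪e j, L (∑ i, a i • u i)⟫_𝕜 := by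
    ext j
    simp [mulVec, dotProduct, inner_sum, inner_smul_right, mul_comm]
  rw [← norm_sum_smul_of_orthonormal hu a, hmulVec]
  refine le_trans (le_of_sq_le_sq ?_ (norm_nonneg _)) (L.le_opNorm _)
  rw [EuclideanSpace.norm_sq_eq]
  exact he.sum_inner_products_le _

lemma norm_of_inner_le_of_eigenvectors [DecidableEq ι] {A B : V →L[𝕜] V} {μ : ι → ℝ} {ν : κ → ℝ}
    {u : ι → V} {e : κ → V} (hu : Orthonormal 𝕜 u) (he : Orthonormal 𝕜 e)
    (hA : ∀ i, A (u i) = (μ i : 𝕜) • u i) (hB : ∀ j x, ⟪e j, B x⟫_𝕜 = ν j * ⟪e j, x⟫_𝕜) {δ : ℝ}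
    (hδ : 0 < δ) (hsep : ∀ j i, δ ≤ |ν j - μ i|) :
    ‖of fun j i ↦ ⟪e j, u i⟫_𝕜‖ ≤ Real.pi / (2 * δ) * ‖B - A‖ := by
  have hcomm (j : κ) (i : ι) : (ν j - μ i) • ⟪e j, u i⟫_𝕜 = ⟪e j, (B - A) (u i)⟫_𝕜 := by
    rw [_root_.sub_apply, inner_sub_right, hB, hA, inner_smul_right, RCLike.real_smul_eq_coe_mul]
    push_cast
    ring
  refine (norm_le_mul_norm_sub_smul hδ hsep _).trans ?_
  simp only [of_apply, hcomm]
  gcongr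
  exact norm_of_inner_apply_le he hu (B - A)

lemma inner_apply_of_eigenvectors {B : V →L[𝕜] V} {ν : κ → ℝ} (c : OrthonormalBasis κ 𝕜 V)
    (hB : ∀ j, B (c j) = (ν j : 𝕜) • c j) (j : κ) (x : V) : ⟪c j, B x⟫_𝕜 = ν j * ⟪c j, x⟫_𝕜 := by
  classical
  conv_lhs => rw [← c.sum_repr' x]
  simp [inner_sum, inner_smul_right, hB, c.inner_eq_ite, mul_comm]

lemma norm_sub_starProjection_le_of_mem_span [DecidableEq ι] [DecidableEq κ] {u : ι → V}
    (hu : Orthonormal 𝕜 u) (c : OrthonormalBasis κ 𝕜 V) (T : Finset κ)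
    [(span 𝕜 (range fun j : T ↦ c j)).HasOrthogonalProjection] {p : V}
    (hp : p ∈ span 𝕜 (range u)) :
    ‖p - (span 𝕜 (range fun j : T ↦ c j)).starProjection p‖ ≤
      ‖of fun (j : (Tᶜ : Finset κ)) i ↦ ⟪c j, u i⟫_𝕜‖ * ‖p‖ := by
  obtain ⟨a, rfl⟩ := mem_span_range_iff_exists_fun 𝕜 |>.1 hp
  set X : Matrix (Tᶜ : Finset κ) ι 𝕜 := of fun j i ↦ ⟪c j, u i⟫_𝕜 with hX
  set p := ∑ i, a i • u i with hpa
  have hcompl : p - (span 𝕜 (range fun j : T ↦ c j)).starProjection p =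
      ∑ j : (Tᶜ : Finset κ), (X *ᵥ a) j • c j := by
    have hXa (j : (Tᶜ : Finset κ)) : (X *ᵥ a) j = ⟪c j, p⟫_𝕜 := by
      simp [hX, hpa, mulVec, dotProduct, inner_sum, inner_smul_right, mul_comm]
    have hproj : (span 𝕜 (range fun j : T ↦ c j)).starProjection p = ∑ j ∈ T, ⟪c j, p⟫_𝕜 • c j := by
      rw [starProjection_span_range (v := fun j : T ↦ c j)
        (c.orthonormal.comp _ Subtype.val_injective)]
      simp only [_root_.sum_apply, rankOne_apply]
      exact Finset.sum_coe_sort T fun j ↦ ⟪c j, p⟫_𝕜 • c j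
    simp only [hXa]
    rw [hproj, Finset.sum_coe_sort Tᶜ fun j ↦ ⟪c j, p⟫_𝕜 • c j, sub_eq_iff_eq_add',
      Finset.sum_add_sum_compl, c.sum_repr']
  rw [hcompl, norm_sum_smul_of_orthonormal (v := fun j : (Tᶜ : Finset κ) ↦ c j)
    (c.orthonormal.comp _ Subtype.val_injective) (WithLp.toLp 2 (X *ᵥ a)),
    hpa, norm_sum_smul_of_orthonormal hu (WithLp.toLp 2 a)]
  exact l2_opNorm_mulVec X (WithLp.toLp 2 a)

theorem norm_sum_rankOne_sub_sum_rankOne_le {A B : V →L[𝕜] V} {μ : ι → ℝ} {ν : κ → ℝ} {u : ι → V}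
    (hu : Orthonormal 𝕜 u) (c : OrthonormalBasis κ 𝕜 V) (hA : ∀ i, A (u i) = (μ i : 𝕜) • u i)
    (hB : ∀ j, B (c j) = (ν j : 𝕜) • c j) {T : Finset κ} (hT : T.card = Fintype.card ι) {δ : ℝ}
    (hδ : 0 < δ) (hsep : ∀ i, ∀ j ∉ T, δ ≤ |μ i - ν j|) :
    ‖∑ j ∈ T, rankOne 𝕜 (c j) (c j) - ∑ i, rankOne 𝕜 (u i) (u i)‖ ≤
      Real.pi / (2 * δ) * ‖B - A‖ := by
  classical
  have hfin : FiniteDimensional 𝕜 V := c.toBasis.finiteDimensional_of_finite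
  have hcT : Orthonormal 𝕜 fun j : T ↦ c j := c.orthonormal.comp _ Subtype.val_injective
  have hdim : finrank 𝕜 (span 𝕜 (range u)) = finrank 𝕜 (span 𝕜 (range fun j : T ↦ c j)) := by
    rw [finrank_span_eq_card hu.linearIndependent]
    exact (finrank_span_eq_card hcT.linearIndependent).trans (by simp [hT]) |>.symm
  have hblock : ‖of fun (j : (Tᶜ : Finset κ)) i ↦ ⟪c j, u i⟫_𝕜‖ ≤ Real.pi / (2 * δ) * ‖B - A‖ :=
    norm_of_inner_le_of_eigenvectors hu (c.orthonormal.comp _ Subtype.val_injective) hA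
      (fun j x ↦ inner_apply_of_eigenvectors c hB j x) hδ
      fun j i ↦ (hsep i j (Finset.mem_compl.1 j.2)).trans_eq (abs_sub_comm _ _)
  have hU (p : V) (hp : p ∈ span 𝕜 (range u)) :
      ‖p - (span 𝕜 (range fun j : T ↦ c j)).starProjection p‖ ≤
        Real.pi / (2 * δ) * ‖B - A‖ * ‖p‖ :=
    (norm_sub_starProjection_le_of_mem_span hu c T hp).trans
      (mul_le_mul_of_nonneg_right hblock (norm_nonneg p))
  have hs : 0 ≤ Real.pi / (2 * δ) * ‖B - A‖ := by positivity
  have hsub := norm_starProjection_sub_le hs hU fun q hq ↦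
    norm_sub_starProjection_le_symm hdim hs hU hq
  rwa [starProjection_span_range hu, starProjection_span_range hcT,
    Finset.sum_coe_sort T fun j ↦ rankOne 𝕜 (c j) (c j)] at hsub

end EigenvectorSpans

section Matrix

open InnerProductSpace

variable {𝕜 ι : Type*} [RCLike 𝕜] {n : ℕ}

lemma toEuclideanLin_vecMulVec_star (v : Fin n → 𝕜) :
    (toEuclideanLin (vecMulVec v (star v))).toContinuousLinearMap =
      rankOne 𝕜 (WithLp.toLp 2 v) (WithLp.toLp 2 v) := by
  have h := symm_toEuclideanLin_rankOne (𝕜 := 𝕜) (WithLp.toLp 2 v) (WithLp.toLp 2 v)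
  rw [LinearEquiv.symm_apply_eq] at h
  exact ContinuousLinearMap.coe_injective h.symm

variable [DecidableEq ι]

lemma orthonormal_toLp {v : ι → Fin n → 𝕜} {S : Finset ι}
    (hv : ∀ i ∈ S, ∀ j ∈ S, star (v i) ⬝ᵥ v j = if i = j then 1 else 0) :
    Orthonormal 𝕜 fun i : S ↦ WithLp.toLp 2 (v i) := by
  rw [orthonormal_iff_ite]
  intro i j
  rw [EuclideanSpace.inner_toLp_toLp, dotProduct_comm, hv i i.2 j j.2]
  simp only [Subtype.ext_iff]

lemma exists_orthonormalBasis_toLp {v : ι → Fin n → 𝕜} {J : Finset ι} (hJ : J.card = n)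
    (hv : ∀ i ∈ J, ∀ j ∈ J, star (v i) ⬝ᵥ v j = if i = j then 1 else 0) :
    ∃ c : OrthonormalBasis J 𝕜 (EuclideanSpace 𝕜 (Fin n)), ∀ j : J, c j = WithLp.toLp 2 (v j) := by
  have hon := orthonormal_toLp hv
  have hspan := hon.linearIndependent.span_eq_top_of_card_eq_finrank' (by simp [hJ])
  exact ⟨.mk hon hspan.ge, fun j ↦ by rw [OrthonormalBasis.coe_mk]⟩

end Matrix

end DavisKahan

open InnerProductSpace DavisKahan in
theorem davis_kahan_sine_general {𝕜 ι κ : Type*} [RCLike 𝕜] [DecidableEq ι] [DecidableEq κ] {n : ℕ}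
    (A E : Matrix (Fin n) (Fin n) 𝕜) (lam : ι → ℝ) (tlam : κ → ℝ) (u : ι → Fin n → 𝕜)
    (tu : κ → Fin n → 𝕜) {S : Finset ι} {T J : Finset κ} (hJ : J.card = n) (hTJ : T ⊆ J)
    (hTS : T.card = S.card)
    (hu_on : ∀ i ∈ S, ∀ j ∈ S, star (u i) ⬝ᵥ u j = if i = j then 1 else 0)
    (htu_on : ∀ i ∈ J, ∀ j ∈ J, star (tu i) ⬝ᵥ tu j = if i = j then 1 else 0)
    (hu_eig : ∀ i ∈ S, A *ᵥ u i = (lam i : 𝕜) • u i)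
    (htu_eig : ∀ j ∈ J, (A + E) *ᵥ tu j = (tlam j : 𝕜) • tu j) {δ : ℝ} (hδ : 0 < δ)
    (hsep : ∀ i ∈ S, ∀ j ∈ J, j ∉ T → δ ≤ |lam i - tlam j|) :
    specNorm ((∑ j ∈ T, vecMulVec (tu j) (star (tu j))) - ∑ i ∈ S, vecMulVec (u i) (star (u i))) ≤
      Real.pi * specNorm E / (2 * δ) := by
  have hu := orthonormal_toLp hu_on
  obtain ⟨c, hc⟩ := exists_orthonormalBasis_toLp hJ htu_on
  have hop := norm_sum_rankOne_sub_sum_rankOne_le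
    (A := (toEuclideanLin A).toContinuousLinearMap)
    (B := (toEuclideanLin (A + E)).toContinuousLinearMap)
    (μ := fun i : S ↦ lam i) (ν := fun j : J ↦ tlam j) (T := T.subtype (· ∈ J)) hu c
    (fun i ↦ congrArg (WithLp.toLp 2) (hu_eig i i.2))
    (fun j ↦ by rw [hc]; exact congrArg (WithLp.toLp 2) (htu_eig j j.2))
    (by simp [Finset.filter_true_of_mem hTJ, hTS]) hδ
    fun i j hj ↦ hsep i i.2 j j.2 (by simpa using hj)
  have hE : (toEuclideanLin (A + E)).toContinuousLinearMap -
      (toEuclideanLin A).toContinuousLinearMap = (toEuclideanLin E).toContinuousLinearMap := by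
    rw [← map_sub, ← map_sub, add_sub_cancel_left]
  have hT : ∑ j ∈ T.subtype (· ∈ J), rankOne 𝕜 (c j) (c j) =
      ∑ j ∈ T, rankOne 𝕜 (WithLp.toLp 2 (tu j)) (WithLp.toLp 2 (tu j)) := by
    simp only [hc]
    exact Finset.sum_subtype_of_mem
      (fun j ↦ rankOne 𝕜 (WithLp.toLp 2 (tu j)) (WithLp.toLp 2 (tu j))) hTJ
  have hS := Finset.sum_coe_sort S fun i ↦
    rankOne 𝕜 (WithLp.toLp 2 (u i)) (WithLp.toLp 2 (u i))
  rw [hE, hT, hS, ← mul_div_right_comm] at hop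
  simpa only [specNorm, map_sub, map_sum, toEuclideanLin_vecMulVec_star] using hop

/-- **Davis–Kahan sine theorem.**  If `|λ_i − λ̃_j| ≥ δ > 0` for every `i ∈ S` and
every `j ∉ S`, then `‖Π̃_S − Π_S‖ ≤ π‖E‖/(2δ)`. (Indices are 1-based.) -/
theorem davis_kahan_sine
    {n : ℕ} (A E : Matrix (Fin n) (Fin n) ℝ) (hA : A.IsSymm) (hE : E.IsSymm)
    (lam tlam : ℕ → ℝ) (u tu : ℕ → (Fin n → ℝ))
    (hlam_mono : ∀ i ∈ Finset.Icc 1 n, ∀ j ∈ Finset.Icc 1 n, i ≤ j → lam j ≤ lam i)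
    (htlam_mono : ∀ i ∈ Finset.Icc 1 n, ∀ j ∈ Finset.Icc 1 n, i ≤ j → tlam j ≤ tlam i)
    (hu_on : ∀ i ∈ Finset.Icc 1 n, ∀ j ∈ Finset.Icc 1 n,
      u i ⬝ᵥ u j = if i = j then 1 else 0)
    (htu_on : ∀ i ∈ Finset.Icc 1 n, ∀ j ∈ Finset.Icc 1 n,
      tu i ⬝ᵥ tu j = if i = j then 1 else 0)
    (hu_eig : ∀ i ∈ Finset.Icc 1 n, A *ᵥ u i = lam i • u i)
    (htu_eig : ∀ i ∈ Finset.Icc 1 n, (A + E) *ᵥ tu i = tlam i • tu i)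
    (S : Finset ℕ) (hS : S ⊆ Finset.Icc 1 n)
    (δ : ℝ) (hδ : 0 < δ)
    (hsep : ∀ i ∈ S, ∀ j ∈ Finset.Icc 1 n, j ∉ S → δ ≤ |lam i - tlam j|) :
    specNorm ((∑ i ∈ S, vecMulVec (tu i) (tu i)) - ∑ i ∈ S, vecMulVec (u i) (u i))
      ≤ Real.pi * specNorm E / (2 * δ) := by
  exact davis_kahan_sine_general A E lam tlam u tu (by simp) hS rfl
    (fun i hi j hj ↦ hu_on i (hS hi) j (hS hj)) htu_on (fun i hi ↦ hu_eig i (hS hi)) htu_eig hδ hsep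
end

section
/- Let S be a nonempty proper subset of {1,…,n} and set δ_S := min_{i∈S, j∉S} |λ_i − λ_j|. If δ_S > 0, then ‖Π̃_S − Π_S‖ ≤ π‖E‖/δ_S. -/
open Matrix

/-!
Let `ε = ‖E‖` and `δ = δ_S`. By Weyl's inequality `|λ̃ᵢ − λⱼ| ≥ δ − ε` whenever exactly one of
`i`, `j` lies in `S`, and `⟪ũᵢ, E uⱼ⟫ = (λ̃ᵢ − λⱼ) ⟪ũᵢ, uⱼ⟫`. To bound the off-diagonal blocks of
the overlap `⟪ũᵢ, uⱼ⟫` by `2ε / (δ − ε)`, one needs the Schur multiplier `(p − q)⁻¹`, restricted to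
`|p − q| ≥ 1`, to have norm at most `2`. Replace `y⁻¹` by a `C¹` function `K` which agrees with it
for `|y| ≥ 1`. If `K` and `K'` are square integrable, then `K` is the convolution of `K + K'` with
`exp (-y)` on `[0, ∞)`, so that `K (p − q)` is an inner product of two vectors of `L²(ℝ)` depending
on `p` and on `q` only; such a multiplier is bounded by the product of the norms of the vectors.
The two off-diagonal blocks control the difference of the projections. This proves the theorem when
`πε < δ`, because then `2ε / (δ − ε) ≤ πε / δ`; otherwise the norm of a difference of projections
is at most `1 ≤ πε / δ`.
-/

section

open MeasureTheory Set RCLike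
open scoped InnerProductSpace ComplexConjugate

section SobolevKernel

theorem inner_toLp_toLp_eq_integral {X : Type*} [MeasurableSpace X] {μ : Measure X} {f g : X → ℝ}
    (hf : MemLp f 2 μ) (hg : MemLp g 2 μ) :
    ⟪hf.toLp f, hg.toLp g⟫_ℝ = ∫ x, f x * g x ∂μ := by
  rw [L2.inner_def]
  refine integral_congr_ae ?_
  filter_upwards [hf.coeFn_toLp, hg.coeFn_toLp] with x hfx hgx
  simp [hfx, hgx, mul_comm]

theorem norm_toLp_sq_eq_integral {X : Type*} [MeasurableSpace X] {μ : Measure X} {f : X → ℝ}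
    (hf : MemLp f 2 μ) : ‖hf.toLp f‖ ^ 2 = ∫ x, f x ^ 2 ∂μ := by
  rw [← real_inner_self_eq_norm_sq, inner_toLp_toLp_eq_integral]
  simp only [sq]

/-- The function `exp (-y)` cut off to `[0, ∞)`: the convolution kernel inverting `1 + d/dy`. -/
noncomputable def expTail : ℝ → ℝ := (Ici 0).indicator fun y => Real.exp (-y)

theorem expTail_sq (y : ℝ) : expTail y ^ 2 = (Ici 0).indicator (fun y => Real.exp (-2 * y)) y := by
  by_cases hy : y ∈ Ici 0
  · simp only [expTail, indicator_of_mem hy, ← Real.exp_nat_mul]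
    ring_nf
  · simp [expTail, indicator_of_notMem hy]

theorem memLp_expTail : MemLp expTail 2 := by
  have hmeas : Measurable expTail := Measurable.indicator (by fun_prop) measurableSet_Ici
  rw [memLp_two_iff_integrable_sq hmeas.aestronglyMeasurable]
  simp only [expTail_sq]
  rw [integrable_indicator_iff measurableSet_Ici, integrableOn_Ici_iff_integrableOn_Ioi]
  exact integrableOn_exp_mul_Ioi (by norm_num) 0

theorem integral_expTail_sq : ∫ y, expTail y ^ 2 = 1 / 2 := by
  simp only [expTail_sq]
  rw [integral_indicator measurableSet_Ici, integral_Ici_eq_integral_Ioi,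
    integral_exp_mul_Ioi (by norm_num)]
  norm_num

variable {K K' : ℝ → ℝ}

theorem integral_mul_expTail_sub (hderiv : ∀ x, HasDerivAt K (K' x) x) (hK : MemLp K 2)
    (hK' : MemLp K' 2) (x : ℝ) : ∫ y, (K y + K' y) * expTail (x - y) = K x := by
  have hexp : MemLp (fun y => expTail (x - y)) 2 :=
    memLp_expTail.comp_measurePreserving (Measure.measurePreserving_sub_left volume x)
  have restrict (f : ℝ → ℝ) : (fun y => f y * expTail (x - y)) =
      (Iic x).indicator fun y => f y * Real.exp (y - x) := by
    ext y
    by_cases hy : y ≤ x <;> simp [expTail, hy]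
  have integrableOn {f : ℝ → ℝ} (hf : MemLp f 2) :
      IntegrableOn (fun y => f y * Real.exp (y - x)) (Iic x) := by
    rw [← integrable_indicator_iff measurableSet_Iic, ← restrict]
    exact hf.integrable_mul hexp
  have hprod (y : ℝ) : HasDerivAt (fun y => K y * Real.exp (y - x))
      ((K y + K' y) * Real.exp (y - x)) y := by
    have := (hderiv y).mul ((hasDerivAt_id y).sub_const x).exp
    exact this.congr_deriv (by simp only [id]; ring)
  have hlim := tendsto_zero_of_hasDerivAt_of_integrableOn_Iic (fun y _ => hprod y)
    (integrableOn (hK.add hK')) (integrableOn hK)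
  rw [restrict fun y => K y + K' y, integral_indicator measurableSet_Iic,
    integral_Iic_of_hasDerivAt_of_tendsto' (fun y _ => hprod y) (integrableOn (hK.add hK')) hlim]
  simp

theorem integral_add_deriv_sq (hderiv : ∀ x, HasDerivAt K (K' x) x) (hK : MemLp K 2)
    (hK' : MemLp K' 2) :
    ∫ y, (K y + K' y) ^ 2 = (∫ y, K y ^ 2) + ∫ y, K' y ^ 2 := by
  have hcross_int : Integrable fun y => 2 * K y * K' y := by
    simpa only [mul_assoc] using! (hK.integrable_mul hK').const_mul 2
  have hsq_int : Integrable fun y => K y ^ 2 + K' y ^ 2 := hK.integrable_sq.add hK'.integrable_sq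
  have hcross : ∫ y, 2 * K y * K' y = 0 :=
    integral_eq_zero_of_hasDerivAt_of_integrable
      (fun y => by simpa using! (hderiv y).pow 2) hcross_int hK.integrable_sq
  calc ∫ y, (K y + K' y) ^ 2 = ∫ y, (K y ^ 2 + K' y ^ 2) + 2 * K y * K' y := by
        congr with y
        ring
    _ = (∫ y, K y ^ 2) + ∫ y, K' y ^ 2 := by
        rw [integral_add hsq_int hcross_int, hcross, add_zero,
          integral_add hK.integrable_sq hK'.integrable_sq]

theorem exists_inner_eq_apply_sub (hderiv : ∀ x, HasDerivAt K (K' x) x) (hK : MemLp K 2)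
    (hK' : MemLp K' 2) :
    ∃ f g : ℝ → Lp ℝ 2 (volume : Measure ℝ), (∀ p q, ⟪f p, g q⟫_ℝ = K (p - q)) ∧
      (∀ p, ‖f p‖ ^ 2 = (∫ y, K y ^ 2) + ∫ y, K' y ^ 2) ∧ ∀ q, ‖g q‖ ^ 2 = 1 / 2 := by
  have hf (p : ℝ) : MemLp (fun s => K (p - s) + K' (p - s)) 2 :=
    (hK.add hK').comp_measurePreserving (Measure.measurePreserving_sub_left volume p)
  have hg (q : ℝ) : MemLp (fun s => expTail (s - q)) 2 :=
    memLp_expTail.comp_measurePreserving (measurePreserving_sub_right volume q)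
  refine ⟨fun p => (hf p).toLp _, fun q => (hg q).toLp _, fun p q => ?_, fun p => ?_, fun q => ?_⟩
  · rw [inner_toLp_toLp_eq_integral, ← integral_mul_expTail_sub hderiv hK hK',
      ← integral_sub_left_eq_self _ volume p]
    congr with s
    ring_nf
  · rw [norm_toLp_sq_eq_integral, ← integral_add_deriv_sq hderiv hK hK']
    exact integral_sub_left_eq_self (fun y => (K y + K' y) ^ 2) volume p
  · rw [norm_toLp_sq_eq_integral, ← integral_expTail_sq]
    exact integral_sub_right_eq_self (fun y => expTail y ^ 2) q

end SobolevKernel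

section CutoffInv

/-- A `C¹` function on `ℝ` that agrees with `y⁻¹` for `1 ≤ |y|`. The odd cubic used for `|y| ≤ 1` is
the one matching the values and the slopes of `y⁻¹` at `±1`. -/
noncomputable def cutoffInv (y : ℝ) : ℝ := if |y| ≤ 1 then y * (2 - y ^ 2) else y⁻¹

/-- The derivative of `cutoffInv`, given by an explicit formula; see `hasDerivAt_cutoffInv`. -/
noncomputable def cutoffInvDeriv (y : ℝ) : ℝ := if |y| ≤ 1 then 2 - 3 * y ^ 2 else -(y ^ 2)⁻¹

theorem cutoffInv_of_one_le {y : ℝ} (hy : 1 ≤ |y|) : cutoffInv y = y⁻¹ := by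
  rcases hy.eq_or_lt with h | h
  · have hsq : y ^ 2 = 1 := by rw [← sq_abs, ← h, one_pow]
    have hinv : y⁻¹ = y := inv_eq_of_mul_eq_one_left (by rw [← sq, hsq])
    rw [cutoffInv, if_pos h.ge, hsq, hinv]
    ring
  · exact if_neg h.not_ge

theorem cutoffInvDeriv_of_one_le {y : ℝ} (hy : 1 ≤ |y|) : cutoffInvDeriv y = -(y ^ 2)⁻¹ := by
  rcases hy.eq_or_lt with h | h
  · have hsq : y ^ 2 = 1 := by rw [← sq_abs, ← h, one_pow]
    rw [cutoffInvDeriv, if_pos h.ge, hsq]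
    norm_num
  · exact if_neg h.not_ge

theorem hasDerivAt_cutoffInv (y : ℝ) : HasDerivAt cutoffInv (cutoffInvDeriv y) y := by
  have inside : HasDerivWithinAt cutoffInv (cutoffInvDeriv y) {z | |z| ≤ 1} y := by
    by_cases hy : |y| ≤ 1
    · rw [cutoffInvDeriv, if_pos hy]
      have hpoly : HasDerivAt (fun z : ℝ => z * (2 - z ^ 2)) (2 - 3 * y ^ 2) y :=
        ((hasDerivAt_id y).mul ((hasDerivAt_pow 2 y).const_sub 2)).congr_deriv (by simp; ring)
      exact hpoly.hasDerivWithinAt.congr_of_mem (fun z hz => if_pos hz) hy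
    · refine HasFDerivWithinAt.of_notMem_closure ?_
      rwa [(isClosed_le (by fun_prop) (by fun_prop)).closure_eq]
  have outside : HasDerivWithinAt cutoffInv (cutoffInvDeriv y) {z | 1 ≤ |z|} y := by
    by_cases hy : 1 ≤ |y|
    · rw [cutoffInvDeriv_of_one_le hy]
      have hy0 : y ≠ 0 := abs_pos.1 (zero_lt_one.trans_le hy)
      exact (hasDerivAt_inv hy0).hasDerivWithinAt.congr_of_mem
        (fun z hz => cutoffInv_of_one_le hz) hy
    · refine HasFDerivWithinAt.of_notMem_closure ?_
      rwa [(isClosed_le (by fun_prop) (by fun_prop)).closure_eq]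
  rw [← hasDerivWithinAt_univ]
  exact (inside.union outside).mono fun z _ => le_total |z| 1

theorem integrable_comp_abs {E : Type*} [NormedAddCommGroup E] {f : ℝ → E}
    (hf : IntegrableOn f (Ioi 0)) :
    Integrable fun y => f |y| := by
  have hpos : IntegrableOn (fun y => f |y|) (Ioi 0) :=
    hf.congr_fun (fun y hy => by rw [abs_of_pos hy]) measurableSet_Ioi
  have hneg : IntegrableOn (fun y => f |y|) (Iio 0) := by
    rw [← (Measure.measurePreserving_neg volume).integrableOn_comp_preimage
      (Homeomorph.neg ℝ).measurableEmbedding]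
    simpa [Function.comp_def] using hpos
  rw [← integrableOn_univ, ← Iic_union_Ioi (a := (0 : ℝ))]
  exact (integrableOn_Iic_iff_integrableOn_Iio (by finiteness) |>.2 hneg).union hpos

theorem integrable_and_integral_eq_of_even_rpow_tail {f g : ℝ → ℝ} (hg : Continuous g) {c : ℝ}
    (hc : c < -1) (hin : ∀ y, |y| ≤ 1 → f y = g |y|) (hout : ∀ y, 1 ≤ |y| → f y = |y| ^ c) :
    Integrable f ∧ ∫ y, f y = 2 * ((∫ y in (0)..1, g y) - (c + 1)⁻¹) := by
  set F : ℝ → ℝ := fun y => if y ≤ 1 then g y else y ^ c with hF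
  have hfF : f = fun y => F |y| := by
    ext y
    rcases le_or_gt |y| 1 with hy | hy
    · simp [hF, hy, hin]
    · simp [hF, hy.not_ge, hout y hy.le]
  have eqIn : EqOn g F (Ioc 0 1) := fun y hy => (if_pos hy.2).symm
  have eqOut : EqOn (fun y => y ^ c) F (Ioi 1) := fun y hy => (if_neg (not_le.2 hy)).symm
  have hF_in : IntegrableOn F (Ioc 0 1) :=
    hg.integrableOn_Ioc.congr_fun eqIn measurableSet_Ioc
  have hF_out : IntegrableOn F (Ioi 1) :=
    (integrableOn_Ioi_rpow_of_lt hc one_pos).congr_fun eqOut measurableSet_Ioi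
  have hunion := Ioc_union_Ioi_eq_Ioi (zero_le_one' ℝ)
  rw [hfF]
  refine ⟨integrable_comp_abs (hunion ▸ hF_in.union hF_out), ?_⟩
  rw [integral_comp_abs, ← hunion, setIntegral_union Ioc_disjoint_Ioi_same measurableSet_Ioi
    hF_in hF_out, ← setIntegral_congr_fun measurableSet_Ioc eqIn,
    ← setIntegral_congr_fun measurableSet_Ioi eqOut, integral_Ioi_rpow_of_lt hc one_pos,
    intervalIntegral.integral_of_le zero_le_one, Real.one_rpow, neg_div, one_div, sub_eq_add_neg]

theorem memLp_cutoffInv_and_integral_sq :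
    MemLp cutoffInv 2 ∧ ∫ y, cutoffInv y ^ 2 = 352 / 105 := by
  have hmeas : AEStronglyMeasurable cutoffInv :=
    Continuous.aestronglyMeasurable <| continuous_iff_continuousAt.2 fun y =>
      (hasDerivAt_cutoffInv y).continuousAt
  have hpoly : ∫ y in (0 : ℝ)..1, (y * (2 - y ^ 2)) ^ 2 = 71 / 105 := by
    calc ∫ y in (0 : ℝ)..1, (y * (2 - y ^ 2)) ^ 2
        = ∫ y in (0 : ℝ)..1, (4 * y ^ 2 - 4 * y ^ 4 + y ^ 6) := by congr with y; ring
      _ = 71 / 105 := by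
        rw [intervalIntegral.integral_add, intervalIntegral.integral_sub] <;>
          first | fun_prop | norm_num
  have h := integrable_and_integral_eq_of_even_rpow_tail (f := fun y => cutoffInv y ^ 2)
    (g := fun y => (y * (2 - y ^ 2)) ^ 2) (by fun_prop) (c := -2) (by norm_num)
    (fun y hy => by simp [cutoffInv, hy, mul_pow])
    (fun y hy => by simp [cutoffInv_of_one_le hy])
  refine ⟨(memLp_two_iff_integrable_sq hmeas).2 h.1, h.2.trans ?_⟩
  rw [hpoly]
  norm_num

theorem memLp_cutoffInvDeriv_and_integral_sq :
    MemLp cutoffInvDeriv 2 ∧ ∫ y, cutoffInvDeriv y ^ 2 = 64 / 15 := by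
  have hmeas : Measurable cutoffInvDeriv :=
    Measurable.ite (measurableSet_le (by fun_prop) (by fun_prop)) (by fun_prop) (by fun_prop)
  have hpoly : ∫ y in (0 : ℝ)..1, (2 - 3 * y ^ 2) ^ 2 = 9 / 5 := by
    calc ∫ y in (0 : ℝ)..1, (2 - 3 * y ^ 2) ^ 2
        = ∫ y in (0 : ℝ)..1, (4 - 12 * y ^ 2 + 9 * y ^ 4) := by congr with y; ring
      _ = 9 / 5 := by
        rw [intervalIntegral.integral_add, intervalIntegral.integral_sub] <;>
          first | fun_prop | norm_num
  have h := integrable_and_integral_eq_of_even_rpow_tail (f := fun y => cutoffInvDeriv y ^ 2)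
    (g := fun y => (2 - 3 * y ^ 2) ^ 2) (by fun_prop) (c := -4) (by norm_num)
    (fun y hy => by simp [cutoffInvDeriv, hy])
    (fun y hy => by
      have hpow : |y| ^ 4 = (y ^ 2) ^ 2 := by rw [← sq_abs y, ← pow_mul]
      simp [cutoffInvDeriv_of_one_le hy, hpow])
  refine ⟨(memLp_two_iff_integrable_sq hmeas.aestronglyMeasurable).2 h.1, h.2.trans ?_⟩
  rw [hpoly]
  norm_num

theorem exists_inner_eq_inv_sub :
    ∃ f g : ℝ → Lp ℝ 2 (volume : Measure ℝ), (∀ p q, 1 ≤ |p - q| → ⟪f p, g q⟫_ℝ = (p - q)⁻¹) ∧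
      (∀ p, ‖f p‖ ≤ √8) ∧ ∀ q, ‖g q‖ ≤ √(1 / 2) := by
  obtain ⟨hK, hK_sq⟩ := memLp_cutoffInv_and_integral_sq
  obtain ⟨hK', hK'_sq⟩ := memLp_cutoffInvDeriv_and_integral_sq
  obtain ⟨f, g, hfg, hf, hg⟩ := exists_inner_eq_apply_sub hasDerivAt_cutoffInv hK hK'
  refine ⟨f, g, fun p q hpq => ?_, fun p => Real.le_sqrt_of_sq_le ?_,
    fun q => Real.le_sqrt_of_sq_le (hg q).le⟩
  · rw [hfg, cutoffInv_of_one_le hpq]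
  · rw [hf, hK_sq, hK'_sq]
    norm_num

end CutoffInv

section SchurMultiplier

variable {𝕜 E F G ι κ : Type*} [RCLike 𝕜] [Fintype ι] [Fintype κ]
  [NormedAddCommGroup E] [InnerProductSpace 𝕜 E] [NormedAddCommGroup F] [InnerProductSpace 𝕜 F]
  [NormedAddCommGroup G] [InnerProductSpace ℝ G]

theorem norm_sq_sum_smul_of_orthonormal {u : ι → E} (hu : Orthonormal 𝕜 u) (α : ι → 𝕜) :
    ‖∑ i, α i • u i‖ ^ 2 = ∑ i, ‖α i‖ ^ 2 := by
  rw [← ofReal_inj (K := 𝕜), ofReal_pow, ← inner_self_eq_norm_sq_to_K, hu.inner_sum]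
  simp [RCLike.conj_mul]

theorem sum_norm_sq_sum_inner_smul {θ : Type*} [Fintype θ] (e : OrthonormalBasis θ ℝ G)
    {u : ι → E} (hu : Orthonormal 𝕜 u) (f : ι → G) (α : ι → 𝕜) :
    ∑ k, ‖∑ i, (α i * (⟪f i, e k⟫_ℝ : 𝕜)) • u i‖ ^ 2 = ∑ i, ‖α i‖ ^ 2 * ‖f i‖ ^ 2 := by
  simp_rw [norm_sq_sum_smul_of_orthonormal hu, norm_mul, mul_pow, norm_ofReal, sq_abs]
  rw [Finset.sum_comm]
  refine Finset.sum_congr rfl fun i _ => ?_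
  simp_rw [← Finset.mul_sum, ← e.sum_sq_norm_inner_left (f i), Real.norm_eq_abs, sq_abs]

theorem sqrt_sum_norm_sq_sum_inner_smul_le {θ : Type*} [Fintype θ] (e : OrthonormalBasis θ ℝ G)
    {u : ι → E} (hu : Orthonormal 𝕜 u) {f : ι → G} {a : ℝ} (ha : 0 ≤ a) (hf : ∀ i, ‖f i‖ ≤ a)
    (α : ι → 𝕜) :
    √(∑ k, ‖∑ i, (α i * (⟪f i, e k⟫_ℝ : 𝕜)) • u i‖ ^ 2) ≤ a * ‖∑ i, α i • u i‖ := by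
  refine Real.sqrt_le_iff.2 ⟨by positivity, ?_⟩
  rw [sum_norm_sq_sum_inner_smul e hu, mul_pow, norm_sq_sum_smul_of_orthonormal hu, Finset.mul_sum]
  refine Finset.sum_le_sum fun i _ => ?_
  rw [mul_comm]
  gcongr
  exact hf i

theorem norm_sum_inner_mul_inner_le_of_finiteDimensional [FiniteDimensional ℝ G] {u : ι → E}
    {v : κ → F} (hu : Orthonormal 𝕜 u) (hv : Orthonormal 𝕜 v) (Y : F →L[𝕜] E) {f : ι → G}
    {g : κ → G} {a b : ℝ} (ha : 0 ≤ a) (hb : 0 ≤ b) (hf : ∀ i, ‖f i‖ ≤ a) (hg : ∀ j, ‖g j‖ ≤ b)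
    (α : ι → 𝕜) (β : κ → 𝕜) :
    ‖∑ i, ∑ j, conj (α i) * β j * ((⟪f i, g j⟫_ℝ : 𝕜) * ⟪u i, Y (v j)⟫_𝕜)‖ ≤
      a * b * ‖Y‖ * ‖∑ i, α i • u i‖ * ‖∑ j, β j • v j‖ := by
  set e := stdOrthonormalBasis ℝ G
  set x := fun k => ∑ i, (α i * (⟪f i, e k⟫_ℝ : 𝕜)) • u i with hx
  set y := fun k => ∑ j, (β j * (⟪g j, e k⟫_ℝ : 𝕜)) • v j with hy
  have expand : ∑ i, ∑ j, conj (α i) * β j * ((⟪f i, g j⟫_ℝ : 𝕜) * ⟪u i, Y (v j)⟫_𝕜) =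
      ∑ k, ⟪x k, Y (y k)⟫_𝕜 := by
    simp_rw [hx, hy, map_sum, map_smul, sum_inner, inner_sum, inner_smul_left, inner_smul_right,
      ← e.sum_inner_mul_inner (f _) (g _)]
    push_cast
    simp_rw [Finset.sum_mul, Finset.mul_sum]
    rw [eq_comm, Finset.sum_comm]
    refine Finset.sum_congr rfl fun i _ => ?_
    rw [Finset.sum_comm]
    refine Finset.sum_congr rfl fun j _ => Finset.sum_congr rfl fun k _ => ?_
    rw [map_mul, conj_ofReal, real_inner_comm (g j)]
    ring
  calc ‖∑ i, ∑ j, conj (α i) * β j * ((⟪f i, g j⟫_ℝ : 𝕜) * ⟪u i, Y (v j)⟫_𝕜)‖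
      ≤ ∑ k, ‖x k‖ * (‖Y‖ * ‖y k‖) := by
        rw [expand]
        refine norm_sum_le_of_le _ fun k _ => (norm_inner_le_norm _ _).trans ?_
        gcongr
        exact Y.le_opNorm _
    _ = ‖Y‖ * ∑ k, ‖x k‖ * ‖y k‖ := by
        rw [Finset.mul_sum]
        exact Finset.sum_congr rfl fun k _ => by ring
    _ ≤ ‖Y‖ * (√(∑ k, ‖x k‖ ^ 2) * √(∑ k, ‖y k‖ ^ 2)) := by
        gcongr
        exact Real.sum_mul_le_sqrt_mul_sqrt _ _ _
    _ ≤ ‖Y‖ * ((a * ‖∑ i, α i • u i‖) * (b * ‖∑ j, β j • v j‖)) := by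
        gcongr
        exacts [sqrt_sum_norm_sq_sum_inner_smul_le e hu ha hf α,
          sqrt_sum_norm_sq_sum_inner_smul_le e hv hb hg β]
    _ = a * b * ‖Y‖ * ‖∑ i, α i • u i‖ * ‖∑ j, β j • v j‖ := by ring

theorem norm_sum_inner_mul_inner_le {u : ι → E}
    {v : κ → F} (hu : Orthonormal 𝕜 u) (hv : Orthonormal 𝕜 v) (Y : F →L[𝕜] E) {f : ι → G}
    {g : κ → G} {a b : ℝ} (ha : 0 ≤ a) (hb : 0 ≤ b) (hf : ∀ i, ‖f i‖ ≤ a) (hg : ∀ j, ‖g j‖ ≤ b)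
    (α : ι → 𝕜) (β : κ → 𝕜) :
    ‖∑ i, ∑ j, conj (α i) * β j * ((⟪f i, g j⟫_ℝ : 𝕜) * ⟪u i, Y (v j)⟫_𝕜)‖ ≤
      a * b * ‖Y‖ * ‖∑ i, α i • u i‖ * ‖∑ j, β j • v j‖ := by
  set W := Submodule.span ℝ (range f ∪ range g)
  have : FiniteDimensional ℝ W :=
    FiniteDimensional.span_of_finite ℝ ((finite_range f).union (finite_range g))
  have hfW (i) : f i ∈ W := Submodule.subset_span (.inl ⟨i, rfl⟩)
  have hgW (j) : g j ∈ W := Submodule.subset_span (.inr ⟨j, rfl⟩)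
  exact norm_sum_inner_mul_inner_le_of_finiteDimensional hu hv Y (f := fun i => (⟨f i, hfW i⟩ : W))
    (g := fun j => (⟨g j, hgW j⟩ : W)) ha hb hf hg α β

end SchurMultiplier

section Sylvester

variable {𝕜 E F ι κ : Type*} [RCLike 𝕜] [Finite ι] [Finite κ]
  [NormedAddCommGroup E] [InnerProductSpace 𝕜 E] [NormedAddCommGroup F] [InnerProductSpace 𝕜 F]

theorem norm_inner_le_of_inner_eq_sub_mul_inner {u : ι → E} {v : κ → F} (hu : Orthonormal 𝕜 u)
    (hv : Orthonormal 𝕜 v) {Q Y : F →L[𝕜] E} {p : ι → ℝ} {q : κ → ℝ} {d : ℝ} (hd : 0 < d)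
    (hgap : ∀ i j, d ≤ |p i - q j|)
    (hY : ∀ i j, ⟪u i, Y (v j)⟫_𝕜 = ((p i - q j : ℝ) : 𝕜) * ⟪u i, Q (v j)⟫_𝕜)
    {x : E} (hx : x ∈ Submodule.span 𝕜 (range u)) {y : F} (hy : y ∈ Submodule.span 𝕜 (range v)) :
    ‖⟪x, Q y⟫_𝕜‖ ≤ 2 * ‖Y‖ / d * ‖x‖ * ‖y‖ := by
  have := Fintype.ofFinite ι
  have := Fintype.ofFinite κ
  obtain ⟨α, rfl⟩ := Submodule.mem_span_range_iff_exists_fun 𝕜 |>.1 hx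
  obtain ⟨β, rfl⟩ := Submodule.mem_span_range_iff_exists_fun 𝕜 |>.1 hy
  obtain ⟨f, g, hfg, hf, hg⟩ := exists_inner_eq_inv_sub
  have entry (i j) : ((⟪f (p i / d), g (q j / d)⟫_ℝ : ℝ) : 𝕜) * ⟪u i, ((d⁻¹ : ℝ) : 𝕜) • Y (v j)⟫_𝕜 =
      ⟪u i, Q (v j)⟫_𝕜 := by
    have hne : p i - q j ≠ 0 := abs_pos.1 (hd.trans_le (hgap i j))
    have hscaled : 1 ≤ |p i / d - q j / d| := by
      rw [← sub_div, abs_div, abs_of_pos hd]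
      exact (one_le_div hd).2 (hgap i j)
    rw [hfg _ _ hscaled, inner_smul_right, hY, ← mul_assoc, ← mul_assoc, ← ofReal_mul, ← ofReal_mul]
    have : (p i / d - q j / d)⁻¹ * d⁻¹ * (p i - q j) = 1 := by field_simp
    rw [this, ofReal_one, one_mul]
  have hnorm : ‖((d⁻¹ : ℝ) : 𝕜) • Y‖ = ‖Y‖ / d := by
    rw [norm_smul, norm_ofReal, abs_inv, abs_of_pos hd, inv_mul_eq_div]
  have hconst : √8 * √(1 / 2) = 2 := by
    rw [← Real.sqrt_mul (by norm_num), Real.sqrt_eq_iff_mul_self_eq] <;> norm_num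
  calc ‖⟪∑ i, α i • u i, Q (∑ j, β j • v j)⟫_𝕜‖
      = ‖∑ i, ∑ j, conj (α i) * β j * ((⟪f (p i / d), g (q j / d)⟫_ℝ : 𝕜) *
          ⟪u i, (((d⁻¹ : ℝ) : 𝕜) • Y) (v j)⟫_𝕜)‖ := by
        simp_rw [_root_.smul_apply, entry, map_sum, map_smul, sum_inner, inner_sum,
          inner_smul_left, inner_smul_right, mul_assoc]
    _ ≤ √8 * √(1 / 2) * ‖((d⁻¹ : ℝ) : 𝕜) • Y‖ * ‖∑ i, α i • u i‖ * ‖∑ j, β j • v j‖ :=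
        norm_sum_inner_mul_inner_le hu hv _ (Real.sqrt_nonneg _) (Real.sqrt_nonneg _)
          (fun _ => hf _) (fun _ => hg _) α β
    _ = 2 * ‖Y‖ / d * ‖∑ i, α i • u i‖ * ‖∑ j, β j • v j‖ := by
        rw [hconst, hnorm, mul_div_assoc]

end Sylvester

section ProjectionGap

variable {𝕜 H : Type*} [RCLike 𝕜] [NormedAddCommGroup H] [InnerProductSpace 𝕜 H]
  {K L : Submodule 𝕜 H} [K.HasOrthogonalProjection] [L.HasOrthogonalProjection] {c : ℝ}

theorem norm_starProjection_le_of_norm_inner_le (hc : 0 ≤ c) {y : H}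
    (h : ∀ x ∈ K, ‖⟪x, y⟫_𝕜‖ ≤ c * ‖x‖) : ‖K.starProjection y‖ ≤ c := by
  have hsq : ‖K.starProjection y‖ * ‖K.starProjection y‖ ≤ c * ‖K.starProjection y‖ := by
    calc ‖K.starProjection y‖ * ‖K.starProjection y‖ = re ⟪K.starProjection y, y⟫_𝕜 := by
          rw [K.re_inner_starProjection_eq_normSq, sq, K.starProjection_apply, Submodule.coe_norm]
      _ ≤ ‖⟪K.starProjection y, y⟫_𝕜‖ := re_le_norm _
      _ ≤ c * ‖K.starProjection y‖ := h _ (K.starProjection_apply_mem y)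
  rcases (norm_nonneg (K.starProjection y)).eq_or_lt with h0 | hpos
  · rwa [← h0]
  · exact le_of_mul_le_mul_right hsq hpos

theorem norm_starProjection_sub_starProjection_le (hc : 0 ≤ c)
    (hKL : ∀ x ∈ K, ∀ y ∈ Lᗮ, ‖⟪x, y⟫_𝕜‖ ≤ c * ‖x‖ * ‖y‖)
    (hLK : ∀ x ∈ Kᗮ, ∀ y ∈ L, ‖⟪x, y⟫_𝕜‖ ≤ c * ‖x‖ * ‖y‖) :
    ‖K.starProjection - L.starProjection‖ ≤ c := by
  refine ContinuousLinearMap.opNorm_le_bound _ hc fun z => ?_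
  set P := K.starProjection
  set Q := L.starProjection
  have hP : P ((P - Q) z) = P (Lᗮ.starProjection z) := by
    rw [L.starProjection_orthogonal_val, _root_.sub_apply, map_sub, map_sub,
      K.starProjection_eq_self_iff.2 (K.starProjection_apply_mem z)]
  have hP' : Kᗮ.starProjection ((P - Q) z) = -Kᗮ.starProjection (Q z) := by
    rw [_root_.sub_apply, map_sub,
      K.starProjection_orthogonal_apply_eq_zero (K.starProjection_apply_mem z), zero_sub]
  have hbound : ‖P (Lᗮ.starProjection z)‖ ≤ c * ‖Lᗮ.starProjection z‖ :=
    norm_starProjection_le_of_norm_inner_le (by positivity) fun x hx =>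
      (hKL x hx _ (Lᗮ.starProjection_apply_mem z)).trans_eq (by ring)
  have hbound' : ‖Kᗮ.starProjection (Q z)‖ ≤ c * ‖Q z‖ :=
    norm_starProjection_le_of_norm_inner_le (by positivity) fun x hx =>
      (hLK x hx _ (L.starProjection_apply_mem z)).trans_eq (by ring)
  rw [← sq_le_sq₀ (norm_nonneg _) (by positivity)]
  calc ‖(P - Q) z‖ ^ 2 = ‖P (Lᗮ.starProjection z)‖ ^ 2 + ‖Kᗮ.starProjection (Q z)‖ ^ 2 := by
        rw [K.norm_sq_eq_add_norm_sq_starProjection ((P - Q) z), hP, hP', norm_neg]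
    _ ≤ (c * ‖Lᗮ.starProjection z‖) ^ 2 + (c * ‖Q z‖) ^ 2 := by gcongr
    _ = (c * ‖z‖) ^ 2 := by
        rw [mul_pow c ‖z‖, L.norm_sq_eq_add_norm_sq_starProjection z]
        ring

end ProjectionGap

section Eigenbasis

variable {𝕜 H ι : Type*} [RCLike 𝕜] [NormedAddCommGroup H] [InnerProductSpace 𝕜 H]

theorem sum_rankOne_eq_starProjection_span {v : ι → H} (hv : Orthonormal 𝕜 v) (S : Finset ι)
    [(Submodule.span 𝕜 (v '' S)).HasOrthogonalProjection] :
    ∑ i ∈ S, InnerProductSpace.rankOne 𝕜 (v i) (v i) =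
      (Submodule.span 𝕜 (v '' S)).starProjection := by
  classical
  have h := (OrthonormalBasis.span hv S).starProjection_eq_sum_rankOne
  simp only [OrthonormalBasis.span_apply] at h
  rw [← Finset.sum_coe_sort, ← h]
  simp only [Finset.coe_image]

variable [Fintype ι]

theorem orthogonal_span_image_orthonormalBasis_le (b : OrthonormalBasis ι 𝕜 H) (S : Set ι) :
    (Submodule.span 𝕜 (b '' S))ᗮ ≤ Submodule.span 𝕜 (b '' Sᶜ) := by
  intro x hx
  rw [← b.sum_repr' x]
  refine Submodule.sum_mem _ fun i _ => ?_
  by_cases hi : i ∈ S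
  · rw [Submodule.inner_right_of_mem_orthogonal (Submodule.subset_span (mem_image_of_mem b hi)) hx,
      zero_smul]
    exact Submodule.zero_mem _
  · exact Submodule.smul_mem _ _ (Submodule.subset_span (mem_image_of_mem b hi))

theorem inner_apply_of_eigenbasis {U : OrthonormalBasis ι 𝕜 H} {l : ι → 𝕜} {A : H →ₗ[𝕜] H}
    (hA : ∀ i, A (U i) = l i • U i) (i : ι) (x : H) :
    ⟪U i, A x⟫_𝕜 = l i * ⟪U i, x⟫_𝕜 := by
  classical
  conv_lhs => rw [← U.sum_repr' x]
  simp [inner_sum, inner_smul_right, hA, U.inner_eq_ite, mul_comm]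

theorem re_inner_apply_of_eigenbasis {U : OrthonormalBasis ι 𝕜 H} {l : ι → ℝ} {A : H →ₗ[𝕜] H}
    (hA : ∀ i, A (U i) = (l i : 𝕜) • U i) (x : H) :
    re ⟪x, A x⟫_𝕜 = ∑ i, l i * ‖⟪U i, x⟫_𝕜‖ ^ 2 := by
  simp_rw [← U.sum_inner_mul_inner x (A x), map_sum, inner_apply_of_eigenbasis hA]
  refine Finset.sum_congr rfl fun i _ => ?_
  rw [mul_left_comm, ← inner_conj_symm x, RCLike.conj_mul]
  norm_cast

theorem exists_ne_zero_forall_inner_eq_zero [FiniteDimensional 𝕜 H] {κ : Type*} [Fintype κ]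
    (w : κ → H) (hcard : Fintype.card κ < Module.finrank 𝕜 H) :
    ∃ x ≠ 0, ∀ k, ⟪w k, x⟫_𝕜 = 0 := by
  have hker := LinearMap.ker_ne_bot_of_finrank_lt
    (f := LinearMap.pi fun k => (innerSL 𝕜 (w k)).toLinearMap) (by simpa using hcard)
  obtain ⟨x, hx, hx0⟩ := Submodule.exists_mem_ne_zero_of_ne_bot hker
  exact ⟨x, hx0, fun k => congrFun hx k⟩

section Weyl

variable [LinearOrder ι] {U V : OrthonormalBasis ι 𝕜 H} {l m : ι → ℝ} {A B : H →L[𝕜] H}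

theorem exists_ne_zero_inner_eq_zero_of_lt_of_gt (U V : OrthonormalBasis ι 𝕜 H) (i : ι) :
    ∃ x ≠ 0, (∀ k, i < k → ⟪U k, x⟫_𝕜 = 0) ∧ ∀ k, k < i → ⟪V k, x⟫_𝕜 = 0 := by
  have := U.toBasis.finiteDimensional_of_finite
  have hcard : Fintype.card {k // k ≠ i} < Module.finrank 𝕜 H := by
    rw [Module.finrank_eq_card_basis U.toBasis]
    exact Fintype.card_subtype_lt (x := i) (by simp)
  obtain ⟨x, hx0, hx⟩ := exists_ne_zero_forall_inner_eq_zero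
    (fun k : {k // k ≠ i} => if i < k then U k else V k) hcard
  refine ⟨x, hx0, fun k hk => ?_, fun k hk => ?_⟩
  · simpa [hk] using hx ⟨k, hk.ne'⟩
  · simpa [hk.not_gt] using hx ⟨k, hk.ne⟩

theorem eigenvalue_sub_le_norm_sub (hl : Antitone l) (hm : Antitone m)
    (hA : ∀ i, A (U i) = (l i : 𝕜) • U i) (hB : ∀ i, B (V i) = (m i : 𝕜) • V i) (i : ι) :
    l i - m i ≤ ‖A - B‖ := by
  obtain ⟨x, hx0, hxU, hxV⟩ := exists_ne_zero_inner_eq_zero_of_lt_of_gt U V i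
  have hA_ge : l i * ‖x‖ ^ 2 ≤ re ⟪x, A x⟫_𝕜 := by
    rw [← ContinuousLinearMap.coe_coe A, re_inner_apply_of_eigenbasis hA,
      ← U.sum_sq_norm_inner_right x, Finset.mul_sum]
    refine Finset.sum_le_sum fun k _ => ?_
    rcases le_or_gt k i with hk | hk
    · gcongr
      exact hl hk
    · simp [hxU k hk]
  have hB_le : re ⟪x, B x⟫_𝕜 ≤ m i * ‖x‖ ^ 2 := by
    rw [← ContinuousLinearMap.coe_coe B, re_inner_apply_of_eigenbasis hB,
      ← V.sum_sq_norm_inner_right x, Finset.mul_sum]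
    refine Finset.sum_le_sum fun k _ => ?_
    rcases le_or_gt i k with hk | hk
    · gcongr
      exact hm hk
    · simp [hxV k hk]
  have hsub : re ⟪x, A x⟫_𝕜 - re ⟪x, B x⟫_𝕜 ≤ ‖A - B‖ * ‖x‖ ^ 2 := by
    calc re ⟪x, A x⟫_𝕜 - re ⟪x, B x⟫_𝕜 = re ⟪x, (A - B) x⟫_𝕜 := by
          rw [_root_.sub_apply, inner_sub_right, map_sub]
      _ ≤ ‖x‖ * ‖(A - B) x‖ := re_inner_le_norm _ _
      _ ≤ ‖x‖ * (‖A - B‖ * ‖x‖) := by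
          gcongr
          exact (A - B).le_opNorm x
      _ = ‖A - B‖ * ‖x‖ ^ 2 := by ring
  have hpos : 0 < ‖x‖ ^ 2 := by positivity
  exact le_of_mul_le_mul_right (by linarith) hpos

theorem abs_eigenvalue_sub_le_norm_sub (hl : Antitone l) (hm : Antitone m)
    (hA : ∀ i, A (U i) = (l i : 𝕜) • U i) (hB : ∀ i, B (V i) = (m i : 𝕜) • V i) (i : ι) :
    |l i - m i| ≤ ‖A - B‖ :=
  abs_sub_le_iff.2 ⟨eigenvalue_sub_le_norm_sub hl hm hA hB i,
    norm_sub_rev A B ▸ eigenvalue_sub_le_norm_sub hm hl hB hA i⟩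

end Weyl

section DavisKahan

variable {U V : OrthonormalBasis ι 𝕜 H} {l m : ι → ℝ} {A B : H →L[𝕜] H}

theorem norm_inner_le_of_eigenbasis (hA : ∀ i, A (U i) = (l i : 𝕜) • U i)
    (hB : ∀ i, B (V i) = (m i : 𝕜) • V i) {S T : Set ι} {d : ℝ} (hd : 0 < d)
    (hgap : ∀ i ∈ S, ∀ j ∈ T, d ≤ |m i - l j|)
    {x : H} (hx : x ∈ Submodule.span 𝕜 (V '' S)) {y : H} (hy : y ∈ Submodule.span 𝕜 (U '' T)) :
    ‖⟪x, y⟫_𝕜‖ ≤ 2 * ‖B - A‖ / d * ‖x‖ * ‖y‖ := by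
  rw [image_eq_range] at hx hy
  refine norm_inner_le_of_inner_eq_sub_mul_inner (Q := .id 𝕜 H)
    (V.orthonormal.comp _ Subtype.val_injective) (U.orthonormal.comp _ Subtype.val_injective) hd
    (fun i j => hgap i i.2 j j.2) (fun i j => ?_) hx hy
  have hBV := inner_apply_of_eigenbasis (A := (B : H →ₗ[𝕜] H)) hB i (U j)
  simp only [ContinuousLinearMap.coe_coe] at hBV
  simp [inner_sub_right, hA, hBV, inner_smul_right, sub_mul]

theorem norm_starProjection_span_sub_le_of_gap (hA : ∀ i, A (U i) = (l i : 𝕜) • U i)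
    (hB : ∀ i, B (V i) = (m i : 𝕜) • V i) {S : Set ι} {d : ℝ} (hd : 0 < d)
    (hgap : ∀ i ∈ S, ∀ j ∈ Sᶜ, d ≤ |m i - l j|) (hgap' : ∀ i ∈ Sᶜ, ∀ j ∈ S, d ≤ |m i - l j|)
    [(Submodule.span 𝕜 (V '' S)).HasOrthogonalProjection]
    [(Submodule.span 𝕜 (U '' S)).HasOrthogonalProjection] :
    ‖(Submodule.span 𝕜 (V '' S)).starProjection - (Submodule.span 𝕜 (U '' S)).starProjection‖ ≤
      2 * ‖B - A‖ / d :=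
  norm_starProjection_sub_starProjection_le (by positivity)
    (fun _ hx _ hy => norm_inner_le_of_eigenbasis hA hB hd hgap hx
      (orthogonal_span_image_orthonormalBasis_le U S hy))
    (fun _ hx _ hy => norm_inner_le_of_eigenbasis hA hB hd hgap'
      (orthogonal_span_image_orthonormalBasis_le V S hx) hy)

theorem norm_starProjection_span_sub_le_pi_mul [LinearOrder ι] (hl : Antitone l) (hm : Antitone m)
    (hA : ∀ i, A (U i) = (l i : 𝕜) • U i) (hB : ∀ i, B (V i) = (m i : 𝕜) • V i) {S : Set ι} {δ : ℝ}
    (hδ : 0 < δ) (hgap : ∀ i ∈ S, ∀ j ∈ Sᶜ, δ ≤ |l i - l j|)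
    [(Submodule.span 𝕜 (V '' S)).HasOrthogonalProjection]
    [(Submodule.span 𝕜 (U '' S)).HasOrthogonalProjection] :
    ‖(Submodule.span 𝕜 (V '' S)).starProjection - (Submodule.span 𝕜 (U '' S)).starProjection‖ ≤
      Real.pi * ‖B - A‖ / δ := by
  have hπ := Real.pi_gt_three
  rcases le_or_gt δ (Real.pi * ‖B - A‖) with hlarge | hsmall
  · have hone : 1 ≤ Real.pi * ‖B - A‖ / δ := (one_le_div hδ).2 hlarge
    exact (norm_starProjection_sub_starProjection_le zero_le_one
      (fun x _ y _ => by simpa using norm_inner_le_norm (𝕜 := 𝕜) x y)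
      (fun x _ y _ => by simpa using norm_inner_le_norm (𝕜 := 𝕜) x y)).trans hone
  · have hd : 0 < δ - ‖B - A‖ := by nlinarith [norm_nonneg (B - A)]
    have mixed {i j} (h : δ ≤ |l i - l j|) : δ - ‖B - A‖ ≤ |m i - l j| := by
      have hweyl := abs_eigenvalue_sub_le_norm_sub hm hl hB hA i
      have htri := abs_sub_le (l i) (m i) (l j)
      rw [abs_sub_comm (l i) (m i)] at htri
      linarith
    have hconst : 2 * δ ≤ Real.pi * (δ - ‖B - A‖) := by nlinarith
    calc ‖(Submodule.span 𝕜 (V '' S)).starProjection - (Submodule.span 𝕜 (U '' S)).starProjection‖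
        ≤ 2 * ‖B - A‖ / (δ - ‖B - A‖) :=
          norm_starProjection_span_sub_le_of_gap hA hB hd
            (fun i hi j hj => mixed (hgap i hi j hj))
            (fun i hi j hj => mixed (abs_sub_comm (l j) (l i) ▸ hgap j hj i hi))
      _ ≤ Real.pi * ‖B - A‖ / δ := by
          rw [div_le_div_iff₀ hd hδ]
          linarith [mul_le_mul_of_nonneg_left hconst (norm_nonneg (B - A))]

end DavisKahan

end Eigenbasis

section SpectralNorm

variable {𝕜 : Type*} [RCLike 𝕜]

theorem specNorm_eq_norm_toEuclideanCLM {n : ℕ} (M : Matrix (Fin n) (Fin n) 𝕜) :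
    specNorm M = ‖toEuclideanCLM (𝕜 := 𝕜) M‖ := rfl

theorem orthonormal_toLp_iff {ι κ : Type*} [Fintype ι] [DecidableEq κ] {u : κ → ι → 𝕜} :
    Orthonormal 𝕜 (fun i => WithLp.toLp 2 (u i)) ↔
      ∀ i j, star (u i) ⬝ᵥ u j = if i = j then 1 else 0 := by
  simp [orthonormal_iff_ite, EuclideanSpace.inner_toLp_toLp, dotProduct_comm]

theorem toEuclideanCLM_vecMulVec_star {ι : Type*} [Fintype ι] [DecidableEq ι] (x y : ι → 𝕜) :
    toEuclideanCLM (𝕜 := 𝕜) (vecMulVec x (star y)) =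
      InnerProductSpace.rankOne 𝕜 (WithLp.toLp 2 x) (WithLp.toLp 2 y) := by
  ext z i
  simp [vecMulVec_mulVec, EuclideanSpace.inner_eq_star_dotProduct, dotProduct_comm, mul_comm]

variable {ι κ : Type*} [Fintype ι] {s : Finset κ} {u : κ → ι → 𝕜}

theorem exists_orthonormalBasis_eq_toLp [DecidableEq κ] (hcard : s.card = Fintype.card ι)
    (hu : ∀ i ∈ s, ∀ j ∈ s, star (u i) ⬝ᵥ u j = if i = j then 1 else 0) :
    ∃ b : OrthonormalBasis s 𝕜 (EuclideanSpace 𝕜 ι), ∀ i, b i = WithLp.toLp 2 (u i) := by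
  have hon : Orthonormal 𝕜 fun i : s => WithLp.toLp 2 (u i) :=
    orthonormal_toLp_iff.2 fun i j => by simp only [hu i i.2 j j.2, Subtype.ext_iff]
  have hspan := hon.linearIndependent.span_eq_top_of_card_eq_finrank' (by simpa using hcard)
  exact ⟨OrthonormalBasis.mk hon hspan.ge, fun i => by simp⟩

theorem toEuclideanCLM_sum_vecMulVec_star [DecidableEq ι]
    {b : OrthonormalBasis s 𝕜 (EuclideanSpace 𝕜 ι)} (hb : ∀ i, b i = WithLp.toLp 2 (u i))
    {S : Finset κ} (hS : S ⊆ s) :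
    toEuclideanCLM (𝕜 := 𝕜) (∑ i ∈ S, vecMulVec (u i) (star (u i))) =
      (Submodule.span 𝕜 (b '' {i | ↑i ∈ S})).starProjection := by
  classical
  have hcoe : {i : s | ↑i ∈ S} = (S.subtype (· ∈ s) : Set _) := by
    ext i
    simp
  simp only [hcoe]
  rw [← sum_rankOne_eq_starProjection_span b.orthonormal, map_sum,
    ← Finset.sum_subtype_of_mem _ hS]
  simp only [toEuclideanCLM_vecMulVec_star, hb]

end SpectralNorm

end

theorem davis_kahan_deltaS_general {𝕜 : Type*} [RCLike 𝕜] {n : ℕ}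
    (A E : Matrix (Fin n) (Fin n) 𝕜) (lam tlam : ℕ → ℝ) (u tu : ℕ → (Fin n → 𝕜))
    (hlam : AntitoneOn lam (Finset.Icc 1 n)) (htlam : AntitoneOn tlam (Finset.Icc 1 n))
    (hu_on : ∀ i ∈ Finset.Icc 1 n, ∀ j ∈ Finset.Icc 1 n,
      star (u i) ⬝ᵥ u j = if i = j then 1 else 0)
    (htu_on : ∀ i ∈ Finset.Icc 1 n, ∀ j ∈ Finset.Icc 1 n,
      star (tu i) ⬝ᵥ tu j = if i = j then 1 else 0)
    (hu_eig : ∀ i ∈ Finset.Icc 1 n, A *ᵥ u i = (lam i : 𝕜) • u i)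
    (htu_eig : ∀ i ∈ Finset.Icc 1 n, (A + E) *ᵥ tu i = (tlam i : 𝕜) • tu i)
    {S : Finset ℕ} (hS : S ⊆ Finset.Icc 1 n) {δ : ℝ} (hδ : 0 < δ)
    (hgap : ∀ i ∈ S, ∀ j ∈ Finset.Icc 1 n \ S, δ ≤ |lam i - lam j|) :
    specNorm ((∑ i ∈ S, vecMulVec (tu i) (star (tu i))) - ∑ i ∈ S, vecMulVec (u i) (star (u i)))
      ≤ Real.pi * specNorm E / δ := by
  obtain ⟨U, hU⟩ := exists_orthonormalBasis_eq_toLp (by simp) hu_on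
  obtain ⟨V, hV⟩ := exists_orthonormalBasis_eq_toLp (by simp) htu_on
  have hA (i) : toEuclideanCLM (𝕜 := 𝕜) A (U i) = (lam i : 𝕜) • U i := by
    simp [hU, hu_eig i i.2]
  have hB (i) : toEuclideanCLM (𝕜 := 𝕜) (A + E) (V i) = (tlam i : 𝕜) • V i := by
    rw [hV, toEuclideanCLM_toLp, htu_eig i i.2, WithLp.toLp_smul]
  have hE : toEuclideanCLM (𝕜 := 𝕜) E =
      toEuclideanCLM (𝕜 := 𝕜) (A + E) - toEuclideanCLM (𝕜 := 𝕜) A := by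
    rw [← map_sub, add_sub_cancel_left]
  rw [specNorm_eq_norm_toEuclideanCLM, specNorm_eq_norm_toEuclideanCLM, map_sub,
    toEuclideanCLM_sum_vecMulVec_star hV hS, toEuclideanCLM_sum_vecMulVec_star hU hS, hE]
  exact norm_starProjection_span_sub_le_pi_mul
    (l := fun i : Finset.Icc 1 n => lam i) (m := fun i : Finset.Icc 1 n => tlam i)
    (fun i j hij => hlam i.2 j.2 hij) (fun i j hij => htlam i.2 j.2 hij) hA hB hδ
    fun i hi j hj => hgap i hi j (Finset.mem_sdiff.2 ⟨j.2, hj⟩)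

/-- **Davis–Kahan, eigenvalues of `A` only.**  For a nonempty proper subset `S` of
`{1,…,n}`, with `δ_S := min_{i∈S, j∉S} |λ_i − λ_j| > 0`, one has
`‖Π̃_S − Π_S‖ ≤ π‖E‖/δ_S`. (Indices are 1-based.) -/
theorem davis_kahan_deltaS
    {n : ℕ} (A E : Matrix (Fin n) (Fin n) ℝ) (hA : A.IsSymm) (hE : E.IsSymm)
    (lam tlam : ℕ → ℝ) (u tu : ℕ → (Fin n → ℝ))
    (hlam_mono : ∀ i ∈ Finset.Icc 1 n, ∀ j ∈ Finset.Icc 1 n, i ≤ j → lam j ≤ lam i)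
    (htlam_mono : ∀ i ∈ Finset.Icc 1 n, ∀ j ∈ Finset.Icc 1 n, i ≤ j → tlam j ≤ tlam i)
    (hu_on : ∀ i ∈ Finset.Icc 1 n, ∀ j ∈ Finset.Icc 1 n,
      u i ⬝ᵥ u j = if i = j then 1 else 0)
    (htu_on : ∀ i ∈ Finset.Icc 1 n, ∀ j ∈ Finset.Icc 1 n,
      tu i ⬝ᵥ tu j = if i = j then 1 else 0)
    (hu_eig : ∀ i ∈ Finset.Icc 1 n, A *ᵥ u i = lam i • u i)
    (htu_eig : ∀ i ∈ Finset.Icc 1 n, (A + E) *ᵥ tu i = tlam i • tu i)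
    (S : Finset ℕ) (hS : S ⊆ Finset.Icc 1 n)
    (hS_ne : S.Nonempty) (hSc_ne : ((Finset.Icc 1 n) \ S).Nonempty)
    (δS : ℝ)
    (hδS : δS = (S ×ˢ ((Finset.Icc 1 n) \ S)).inf' (hS_ne.product hSc_ne)
      (fun q => |lam q.1 - lam q.2|))
    (hδS_pos : 0 < δS) :
    specNorm ((∑ i ∈ S, vecMulVec (tu i) (tu i)) - ∑ i ∈ S, vecMulVec (u i) (u i))
      ≤ Real.pi * specNorm E / δS :=
  davis_kahan_deltaS_general A E lam tlam u tu hlam_mono htlam_mono hu_on htu_on hu_eig htu_eig hS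
    hδS_pos fun _ hi _ hj => hδS.trans_le (Finset.inf'_le _ (Finset.mk_mem_product hi hj))
end
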